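/- arXiv:2601.14158 — 4 statements merged into one kernel-verified Lean document; each statement's English description precedes it below -/
import Mathlib

section
/- Let d ≥ 2 and let C be a Hermitian matrix on ℂ^d⊗ℂ^d of rank at most 3. Then λ(tr_1[C]) ⊕ λ(tr_2[C]) ≺ λ(tr_1[Λ]) ⊕ λ(tr_2[Λ]), where Λ is the diagonal matrix on ℂ^d⊗ℂ^d whose diagonal lists the eigenvalues of C in decreasing order (with respect to the lexicographic index ordering). -/
open Matrix Finset Kronecker
open scoped ComplexOrder

/-- The first partial trace of a matrix on `ℂ^{d1} ⊗ ℂ^{d2}` (index pairs `(i,s)` ordered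
lexicographically): `(tr_1 C)_{s,t} = ∑_i C_{(i,s),(i,t)}`. -/
noncomputable def ptrace1 {d1 d2 : ℕ} (C : Matrix (Fin d1 × Fin d2) (Fin d1 × Fin d2) ℂ) :
    Matrix (Fin d2) (Fin d2) ℂ :=
  Matrix.of fun s t => ∑ i : Fin d1, C (i, s) (i, t)

/-- The second partial trace: `(tr_2 C)_{i,j} = ∑_s C_{(i,s),(j,s)}`. -/
noncomputable def ptrace2 {d1 d2 : ℕ} (C : Matrix (Fin d1 × Fin d2) (Fin d1 × Fin d2) ℂ) :
    Matrix (Fin d1) (Fin d1) ℂ :=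
  Matrix.of fun i j => ∑ s : Fin d2, C (i, s) (j, s)

/-- The sum of the `k` largest entries of the vector `x` (the largest value of a sum of `k`
entries of `x`), i.e. `∑_{i=1}^k x_i^↓`. -/
noncomputable def maxSum {ι : Type*} [Fintype ι] (x : ι → ℝ) (k : ℕ) : ℝ :=
  sSup {s : ℝ | ∃ A : Finset ι, A.card = k ∧ s = ∑ i ∈ A, x i}

/-- `x ≺ y` (majorization): for every `k`, the sum of the `k` largest entries of `x` is at
most the sum of the `k` largest entries of `y`, and the total sums are equal. -/
def Majorizes {ι κ : Type*} [Fintype ι] [Fintype κ] (x : ι → ℝ) (y : κ → ℝ) : Prop :=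
  (∀ k : ℕ, maxSum x k ≤ maxSum y k) ∧ ∑ i, x i = ∑ j, y j

/-- `x ≺_w y` (weak majorization). -/
def WeakMajorizes {ι κ : Type*} [Fintype ι] [Fintype κ] (x : ι → ℝ) (y : κ → ℝ) : Prop :=
  ∀ k : ℕ, maxSum x k ≤ maxSum y k


def wt {d : ℕ} (T : Finset (Fin d ⊕ Fin d)) (x : Fin d × Fin d) : ℕ :=
  (if Sum.inr x.1 ∈ T then 1 else 0) + (if Sum.inl x.2 ∈ T then 1 else 0)

lemma wt_le_two {d : ℕ} (T : Finset (Fin d ⊕ Fin d)) (x : Fin d × Fin d) : wt T x ≤ 2 := by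
  unfold wt; split_ifs <;> norm_num

lemma sum_ind_le {α : Type*} [DecidableEq α] (T S : Finset α) :
    ∑ x ∈ S, (if x ∈ T then 1 else 0) ≤ T.card := by
  rw [← Finset.sum_filter, ← Finset.card_eq_sum_ones]
  apply Finset.card_le_card
  intro x hx
  exact (Finset.mem_filter.1 hx).2

lemma card_split {d : ℕ} (T : Finset (Fin d ⊕ Fin d)) :
    T.card = T.toLeft.card + T.toRight.card := (Finset.card_toLeft_add_card_toRight).symm

lemma ind1 {α : Type*} [DecidableEq α] (T : Finset α) (a : α) :
    (if a ∈ T then 1 else 0) ≤ T.card := by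
  have := sum_ind_le T {a}
  rwa [Finset.sum_singleton] at this
lemma ind2 {α : Type*} [DecidableEq α] (T : Finset α) (a b : α) (h : a ≠ b) :
    (if a ∈ T then 1 else 0) + (if b ∈ T then 1 else 0) ≤ T.card := by
  simpa [-Finset.sum_boole, Finset.sum_pair h] using sum_ind_le T {a, b}
lemma ind3 {α : Type*} [DecidableEq α] (T : Finset α) (a b c : α) (h : a ≠ b) (h1 : a ≠ c)
    (h2 : b ≠ c) :
    (if a ∈ T then 1 else 0) + (if b ∈ T then 1 else 0) + (if c ∈ T then 1 else 0) ≤ T.card := by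
  have := sum_ind_le T {a, b, c}
  rw [Finset.sum_insert (by simp [h, h1]), Finset.sum_pair h2] at this
  omega

lemma wt_eq {d : ℕ} (T : Finset (Fin d ⊕ Fin d)) (x : Fin d × Fin d) :
    wt T x = (if x.1 ∈ T.toRight then 1 else 0) + (if x.2 ∈ T.toLeft then 1 else 0) := by
  simp [wt]

lemma wt1 {d : ℕ} (T : Finset (Fin d ⊕ Fin d)) (x : Fin d × Fin d) : wt T x ≤ T.card := by
  rw [wt_eq, card_split]
  have := ind1 T.toRight x.1
  have := ind1 T.toLeft x.2
  omega

lemma wt2 {d : ℕ} (T : Finset (Fin d ⊕ Fin d)) (x y : Fin d × Fin d) (h : x ≠ y) :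
    wt T x + wt T y ≤ T.card + 1 := by
  rw [wt_eq, wt_eq, card_split]
  obtain ⟨x1, x2⟩ := x
  obtain ⟨y1, y2⟩ := y
  have a1 := ind1 T.toRight x1
  have a2 := ind1 T.toLeft x2
  have a3 := ind1 T.toRight y1
  have a4 := ind1 T.toLeft y2
  have h1 : ∀ P : Prop, ∀ _ : Decidable P, (if P then 1 else 0) ≤ 1 := by
    intro P _; split_ifs <;> simp
  have b1 := h1 (x1 ∈ T.toRight) inferInstance
  have b2 := h1 (x2 ∈ T.toLeft) inferInstance
  by_cases e : x1 = y1
  · have : x2 ≠ y2 := by rintro rfl; exact h (by rw [e])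
    have := ind2 T.toLeft _ _ this
    simp only
    omega
  · have := ind2 T.toRight _ _ e
    simp only
    omega

lemma ind3' {α : Type*} [DecidableEq α] (T : Finset α) (a b c : α) (h : ¬ (a = b ∧ a = c)) :
    (if a ∈ T then 1 else 0) + (if b ∈ T then 1 else 0) + (if c ∈ T then 1 else 0)
      ≤ T.card + 1 := by
  have h1 : ∀ x, (if x ∈ T then 1 else 0) ≤ 1 := by
    intro x; split_ifs <;> simp
  have b1 := h1 a
  have b2 := h1 b
  have b3 := h1 c
  by_cases e : a = b
  · have := ind2 T a c (fun e' => h ⟨e, e'⟩)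
    omega
  · have := ind2 T a b e
    omega

lemma wt3 {d : ℕ} (T : Finset (Fin d ⊕ Fin d)) (x y z : Fin d × Fin d) (h : x ≠ y)
    (h' : x ≠ z) (h'' : y ≠ z) :
    wt T x + wt T y + wt T z ≤ T.card + 2 := by
  rw [wt_eq, wt_eq, wt_eq, card_split]
  obtain ⟨x1, x2⟩ := x
  obtain ⟨y1, y2⟩ := y
  obtain ⟨z1, z2⟩ := z
  have h1 : ∀ P : Prop, ∀ _ : Decidable P, (if P then 1 else 0) ≤ 1 := by
    intro P _; split_ifs <;> simp
  have b1 := h1 (x1 ∈ T.toRight) inferInstance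
  have b2 := h1 (x2 ∈ T.toLeft) inferInstance
  have b3 := h1 (y1 ∈ T.toRight) inferInstance
  have b4 := h1 (y2 ∈ T.toLeft) inferInstance
  have b5 := h1 (z1 ∈ T.toRight) inferInstance
  have b6 := h1 (z2 ∈ T.toLeft) inferInstance
  simp only
  by_cases p : x1 = y1 ∧ x1 = z1
  · obtain ⟨rfl, rfl⟩ := p
    have := ind3 T.toLeft x2 y2 z2 (by simpa using h) (by simpa using h') (by simpa using h'')
    have := ind1 T.toRight x1
    omega
  · by_cases q : x2 = y2 ∧ x2 = z2
    · obtain ⟨rfl, rfl⟩ := q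
      have := ind3 T.toRight x1 y1 z1 (by simpa using h) (by simpa using h') (by simpa using h'')
      have := ind1 T.toLeft x2
      omega
    · have := ind3' T.toLeft _ _ _ q
      have := ind3' T.toRight _ _ _ p
      omega

lemma wt_lower {d : ℕ} (T : Finset (Fin d ⊕ Fin d)) (x : Fin d × Fin d) :
    T.card + 2 ≤ wt T x + 2 * d := by
  have h := wt1 Tᶜ x
  have h2 : wt T x + wt Tᶜ x = 2 := by
    simp only [wt, Finset.mem_compl]; split_ifs <;> simp_all
  have h3 := Finset.card_add_card_compl T
  rw [Fintype.card_sum, Fintype.card_fin] at h3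
  omega

/-- Prescribed weights, one-sided case. -/
lemma exI {d : ℕ} (hd : 3 ≤ d) (z0 z1 z2 : Fin d) (h01 : z0 ≠ z1) (h02 : z0 ≠ z2)
    (h12 : z1 ≠ z2) (k : ℕ) (hk : k ≤ 2 * d) :
    ∃ T : Finset (Fin d ⊕ Fin d), T.card = k ∧
      (min k 2 ≤ wt T (z0, z0)) ∧
      (min (min (k+1) 4) (2 * k) ≤ wt T (z0, z0) +
        wt T (z0, z1)) ∧
      (min (min (k+2) 6) (3 * k) ≤ wt T (z0, z0) +
        wt T (z0, z1) + wt T (z0, z2)) := by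
  have main : ∀ S : Finset (Fin d ⊕ Fin d), S.card ≤ k → ∃ T, S ⊆ T ∧ T.card = k := by
    intro S hS
    obtain ⟨u, h1, _, h2⟩ := Finset.exists_subsuperset_card_eq (Finset.subset_univ S) hS
      (by simp [*]; try omega)
    exact ⟨u, h1, h2⟩
  rcases (by omega : k = 0 ∨ k = 1 ∨ k = 2 ∨ k = 3 ∨ 4 ≤ k) with h | h | h | h | h
  · subst h; exact ⟨∅, by simp⟩
  · obtain ⟨T, h1, h2⟩ := main {Sum.inr z0} (by simp [*]; try omega)
    refine ⟨T, h2, ?_⟩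
    simp [Finset.insert_subset_iff] at h1
    simp [wt, h1, h]; try omega
  · obtain ⟨T, h1, h2⟩ := main {Sum.inr z0, Sum.inl z0} (by simp [*]; try omega)
    refine ⟨T, h2, ?_⟩
    simp [Finset.insert_subset_iff] at h1
    simp [wt, h1, h]; try omega
  · obtain ⟨T, h1, h2⟩ := main {Sum.inr z0, Sum.inl z0,
      Sum.inl z1} (by simp [*]; try omega)
    refine ⟨T, h2, ?_⟩
    simp [Finset.insert_subset_iff] at h1
    simp [wt, h1, h]; try omega
  · obtain ⟨T, h1, h2⟩ := main {Sum.inr z0, Sum.inl z0,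
      Sum.inl z1, Sum.inl z2} (by simp [*]; try omega)
    refine ⟨T, h2, ?_⟩
    simp [Finset.insert_subset_iff] at h1
    simp [wt, h1]

lemma exII {d : ℕ} (hd : 2 ≤ d) (z0 z1 l : Fin d) (h01 : z0 ≠ z1) (h0l : z0 ≠ l)
    (h1l : 3 ≤ d → z1 ≠ l) (k : ℕ) (hk : k ≤ 2 * d) :
    ∃ T : Finset (Fin d ⊕ Fin d), T.card = k ∧
      (min k 2 ≤ wt T (z0, z0)) ∧
      (min (min (k+1) 4) (2 * k) ≤ wt T (z0, z0) +
        wt T (z0, z1)) ∧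
      wt T (l, l) ≤ k + 2 - 2 * d := by
  have main : ∀ S R : Finset (Fin d ⊕ Fin d), S ⊆ Rᶜ → S.card ≤ k → k + R.card ≤ 2 * d →
      ∃ T, S ⊆ T ∧ T ⊆ Rᶜ ∧ T.card = k := by
    intro S R hSR hS hR
    obtain ⟨u, h1, h3, h2⟩ := Finset.exists_subsuperset_card_eq hSR hS
      (by rw [Finset.card_compl]; simp; omega)
    exact ⟨u, h1, h3, h2⟩
  rcases (by omega : k = 0 ∨ k = 1 ∨ k = 2 ∨ (3 ≤ k ∧ k ≤ 2 * d - 2) ∨ (3 ≤ k ∧ k = 2 * d - 1)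
    ∨ k = 2 * d) with h | h | h | h | h | h
  · subst h; exact ⟨∅, by simp [wt]⟩
  · obtain ⟨T, h1, h3, h2⟩ := main {Sum.inr z0}
      {Sum.inr l, Sum.inl l} (by simp [h0l, h0l.symm]) (by simp [*]; try omega)
      (by simp [*]; try omega)
    refine ⟨T, h2, ?_⟩
    simp [Finset.insert_subset_iff] at h1
    have h4 : Sum.inr l ∉ T := fun hh => by simpa using h3 hh
    have h5 : Sum.inl l ∉ T := fun hh => by simpa using h3 hh
    simp [wt, h1, h, h4, h5]; try omega
  · obtain ⟨T, h1, h3, h2⟩ := main {Sum.inr z0, Sum.inl z0}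
      {Sum.inr l, Sum.inl l} (by simp [Finset.insert_subset_iff, h0l, h0l.symm])
      (by simp [*]; try omega) (by simp [*]; try omega)
    refine ⟨T, h2, ?_⟩
    simp [Finset.insert_subset_iff] at h1
    have h4 : Sum.inr l ∉ T := fun hh => by simpa using h3 hh
    have h5 : Sum.inl l ∉ T := fun hh => by simpa using h3 hh
    simp [wt, h1, h, h4, h5]; try omega
  · have hd2 := h1l (by omega)
    obtain ⟨T, h1, h3, h2⟩ := main {Sum.inr z0, Sum.inl z0,
        Sum.inl z1}
      {Sum.inr l, Sum.inl l}
      (by simp [Finset.insert_subset_iff, h0l, h0l.symm, hd2])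
      (by simp [*]; try omega) (by simp [*]; try omega)
    refine ⟨T, h2, ?_⟩
    simp [Finset.insert_subset_iff] at h1
    have h4 : Sum.inr l ∉ T := fun hh => by simpa using h3 hh
    have h5 : Sum.inl l ∉ T := fun hh => by simpa using h3 hh
    simp [wt, h1, h4, h5]
  · obtain ⟨T, h1, h3, h2⟩ := main {Sum.inr z0, Sum.inl z0,
        Sum.inl z1}
      {Sum.inr l}
      (by simp [Finset.insert_subset_iff, h0l, h0l.symm])
      (by simp [*]; try omega) (by simp [*]; try omega)
    refine ⟨T, h2, ?_⟩
    simp [Finset.insert_subset_iff] at h1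
    have h4 : Sum.inr l ∉ T := fun hh => by simpa using h3 hh
    simp [wt, h1, h4]
    split_ifs <;> omega
  · refine ⟨Finset.univ, by simp; omega, ?_⟩
    simp [wt]; omega

lemma wtI2 : ∀ (T : Finset (Fin 2 ⊕ Fin 2)), ∃ T' : Finset (Fin 2 ⊕ Fin 2), T'.card = T.card ∧
    ∀ x y z : Fin 2 × Fin 2, x ≠ y → x ≠ z → y ≠ z → wt T x ≤ wt T' (0,0) ∧
      wt T x + wt T y ≤ wt T' (0,0) + wt T' (0,1) ∧
      wt T x + wt T y + wt T z ≤ wt T' (0,0) + wt T' (0,1) + wt T' (1,0) := by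
  have h : ∀ k : Fin 5, ∃ T' : Finset (Fin 2 ⊕ Fin 2), T'.card = k ∧
    ∀ T : Finset (Fin 2 ⊕ Fin 2), T.card = k →
    ∀ x y z : Fin 2 × Fin 2, x ≠ y → x ≠ z → y ≠ z → wt T x ≤ wt T' (0,0) ∧
      wt T x + wt T y ≤ wt T' (0,0) + wt T' (0,1) ∧
      wt T x + wt T y + wt T z ≤ wt T' (0,0) + wt T' (0,1) + wt T' (1,0) := by
    intro k
    fin_cases k
    · exact ⟨∅, by decide +kernel⟩
    · exact ⟨{Sum.inr 0}, by decide +kernel⟩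
    · exact ⟨{Sum.inr 0, Sum.inl 0}, by decide +kernel⟩
    · exact ⟨{Sum.inr 0, Sum.inl 0, Sum.inl 1}, by decide +kernel⟩
    · exact ⟨Finset.univ, by decide +kernel⟩
  intro T
  have hT : T.card ≤ 4 := by simpa using Finset.card_le_univ T
  obtain ⟨T', h1, h2⟩ := h ⟨T.card, by omega⟩
  exact ⟨T', h1, h2 T rfl⟩

lemma four_false {n : ℕ} (μ : Fin n → ℝ) (hr : (Finset.univ.filter (fun k => μ k ≠ 0)).card ≤ 3)
    (a b c e : Fin n) (h : a < b ∧ b < c ∧ c < e)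
    (ha : μ a ≠ 0) (hb : μ b ≠ 0) (hc : μ c ≠ 0) (he : μ e ≠ 0) : False := by
  have h1 : ({a, b, c, e} : Finset (Fin n)) ⊆ Finset.univ.filter (fun k => μ k ≠ 0) := by
    intro x hx
    simp only [Finset.mem_insert, Finset.mem_singleton] at hx
    rcases hx with rfl | rfl | rfl | rfl <;> simp [*]
  have h2 := Finset.card_le_card h1
  obtain ⟨h3, h4, h5⟩ := h
  have h6 := h3.trans h4
  have h7 := h4.trans h5
  have h8 := h6.trans h5
  rw [Finset.card_insert_of_notMem (by simp [h3.ne, h6.ne, h8.ne]),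
    Finset.card_insert_of_notMem (by simp [h4.ne, h7.ne]), Finset.card_pair h5.ne] at h2
  omega

lemma sum_three {n : ℕ} (μ : Fin n → ℝ) (f : Fin n → ℝ) (a b c : Fin n) (h : a < b ∧ b < c)
    (hz : ∀ k, k ≠ a → k ≠ b → k ≠ c → μ k = 0) :
    ∑ k, μ k * f k = μ a * f a + μ b * f b + μ c * f c := by
  rw [← Finset.sum_subset (Finset.subset_univ {a, b, c})]
  · rw [Finset.sum_insert (by simp [h.1.ne, (h.1.trans h.2).ne]), Finset.sum_pair h.2.ne]
    ring
  · intro x _ hx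
    simp only [Finset.mem_insert, Finset.mem_singleton, not_or] at hx
    rw [hz x hx.1 hx.2.1 hx.2.2, zero_mul]

/-- Existence of comparison set: one-sided case for every `d ≥ 2`. -/
lemma compI {d : ℕ} (hd : 2 ≤ d) (T : Finset (Fin d ⊕ Fin d)) (h0 : 0 < d * d) (h1 : 1 < d * d)
    (h2 : 2 < d * d) :
    ∃ T' : Finset (Fin d ⊕ Fin d), T'.card = T.card ∧
    ∀ x y z : Fin d × Fin d, x ≠ y → x ≠ z → y ≠ z →
      wt T x ≤ wt T' (finProdFinEquiv.symm ⟨0, h0⟩) ∧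
      wt T x + wt T y ≤ wt T' (finProdFinEquiv.symm ⟨0, h0⟩)
        + wt T' (finProdFinEquiv.symm ⟨1, h1⟩) ∧
      wt T x + wt T y + wt T z ≤ wt T' (finProdFinEquiv.symm ⟨0, h0⟩)
        + wt T' (finProdFinEquiv.symm ⟨1, h1⟩) + wt T' (finProdFinEquiv.symm ⟨2, h2⟩) := by
  rcases (by omega : d = 2 ∨ 3 ≤ d) with rfl | hd3
  · have e0 : (finProdFinEquiv.symm ⟨0, h0⟩ : Fin 2 × Fin 2) = (0, 0) := by
      rw [Equiv.symm_apply_eq]; rfl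
    have e1 : (finProdFinEquiv.symm ⟨1, h1⟩ : Fin 2 × Fin 2) = (0, 1) := by
      rw [Equiv.symm_apply_eq]; rfl
    have e2 : (finProdFinEquiv.symm ⟨2, h2⟩ : Fin 2 × Fin 2) = (1, 0) := by
      rw [Equiv.symm_apply_eq]; rfl
    rw [e0, e1, e2]
    exact wtI2 T
  · have e0 : finProdFinEquiv.symm ⟨0, h0⟩ = ((⟨0, by omega⟩, ⟨0, by omega⟩) : Fin d × Fin d) := by
      rw [Equiv.symm_apply_eq]; ext; simp
    have e1 : finProdFinEquiv.symm ⟨1, h1⟩ = ((⟨0, by omega⟩, ⟨1, by omega⟩) : Fin d × Fin d) := by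
      rw [Equiv.symm_apply_eq]; ext; simp
    have e2 : finProdFinEquiv.symm ⟨2, h2⟩ = ((⟨0, by omega⟩, ⟨2, by omega⟩) : Fin d × Fin d) := by
      rw [Equiv.symm_apply_eq]; ext; simp
    have hT : T.card ≤ 2 * d := by
      have := Finset.card_le_univ T
      rw [Fintype.card_sum, Fintype.card_fin] at this; omega
    obtain ⟨T', a0, a1, a2, a3⟩ := exI hd3 ⟨0, by omega⟩ ⟨1, by omega⟩ ⟨2, by omega⟩
      (by simp) (by simp) (by simp) T.card hT
    refine ⟨T', a0, fun x y z hxy hxz hyz => ?_⟩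
    rw [e0, e1, e2]
    have := wt_le_two T x
    have := wt_le_two T y
    have := wt_le_two T z
    have := wt1 T x
    have := wt1 T y
    have := wt1 T z
    have := wt2 T x y hxy
    have := wt3 T x y z hxy hxz hyz
    refine ⟨?_, ?_, ?_⟩ <;> omega

lemma compII {d : ℕ} (hd : 2 ≤ d) (T : Finset (Fin d ⊕ Fin d)) (h0 : 0 < d * d) (h1 : 1 < d * d)
    (h2 : d * d - 1 < d * d) :
    ∃ T' : Finset (Fin d ⊕ Fin d), T'.card = T.card ∧
    ∀ x y z : Fin d × Fin d, x ≠ y →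
      wt T x ≤ wt T' (finProdFinEquiv.symm ⟨0, h0⟩) ∧
      wt T x + wt T y ≤ wt T' (finProdFinEquiv.symm ⟨0, h0⟩)
        + wt T' (finProdFinEquiv.symm ⟨1, h1⟩) ∧
      wt T' (finProdFinEquiv.symm ⟨d * d - 1, h2⟩) ≤ wt T z := by
  have e0 : finProdFinEquiv.symm ⟨0, h0⟩ = ((⟨0, by omega⟩, ⟨0, by omega⟩) : Fin d × Fin d) := by
    rw [Equiv.symm_apply_eq]; ext; simp
  have e1 : finProdFinEquiv.symm ⟨1, h1⟩ = ((⟨0, by omega⟩, ⟨1, by omega⟩) : Fin d × Fin d) := by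
    rw [Equiv.symm_apply_eq]; ext; simp
  have e2 : finProdFinEquiv.symm ⟨d * d - 1, h2⟩ =
      ((⟨d - 1, by omega⟩, ⟨d - 1, by omega⟩) : Fin d × Fin d) := by
    rw [Equiv.symm_apply_eq]; ext; simp
    obtain ⟨m, rfl⟩ : ∃ m, d = m + 1 := ⟨d - 1, by omega⟩
    rw [Nat.add_sub_cancel]
    ring_nf
    omega
  have hT : T.card ≤ 2 * d := by
    have := Finset.card_le_univ T
    rw [Fintype.card_sum, Fintype.card_fin] at this; omega
  obtain ⟨T', a0, a1, a2, a3⟩ := exII hd ⟨0, by omega⟩ ⟨1, by omega⟩ ⟨d - 1, by omega⟩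
    (by simp) (by simp; omega) (by intro; simp; omega) T.card hT
  refine ⟨T', a0, fun x y z hxy => ?_⟩
  rw [e0, e1, e2]
  have := wt_le_two T x
  have := wt_le_two T y
  have := wt1 T x
  have := wt1 T y
  have := wt2 T x y hxy
  have := wt_lower T z
  refine ⟨?_, ?_, ?_⟩ <;> omega

lemma core_pos {d : ℕ} (hd : 2 ≤ d) (μ : Fin (d * d) → ℝ) (hμ : Antitone μ)
    (hr : (Finset.univ.filter (fun k => μ k ≠ 0)).card ≤ 3)
    (hn : 4 ≤ d * d) (hpos : 0 ≤ μ ⟨d * d - 2, by omega⟩)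
    (T : Finset (Fin d ⊕ Fin d)) (τ : Fin (d * d) ≃ Fin d × Fin d) :
    ∃ T' : Finset (Fin d ⊕ Fin d), T'.card = T.card ∧
      ∑ k, μ k * (wt T (τ k) : ℝ) ≤ ∑ k, μ k * (wt T' (finProdFinEquiv.symm k) : ℝ) := by
  have hn0 : 0 < d * d := by omega
  have hn1 : 1 < d * d := by omega
  have hn2 : 2 < d * d := by omega
  have hnl : d * d - 1 < d * d := by omega
  have o01 : μ ⟨1, hn1⟩ ≤ μ ⟨0, hn0⟩ := hμ (by simp)
  have o12 : μ ⟨2, hn2⟩ ≤ μ ⟨1, hn1⟩ := hμ (by simp)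
  have o2 : 0 ≤ μ ⟨2, hn2⟩ := hpos.trans (hμ (by simp; omega))
  have i01 : τ ⟨0, hn0⟩ ≠ τ ⟨1, hn1⟩ := by simp
  have i02 : τ ⟨0, hn0⟩ ≠ τ ⟨2, hn2⟩ := by simp
  have i12 : τ ⟨1, hn1⟩ ≠ τ ⟨2, hn2⟩ := by simp
  by_cases hl : 0 ≤ μ ⟨d * d - 1, hnl⟩
  · obtain ⟨T', h1, h2⟩ := compI hd T hn0 hn1 hn2
    refine ⟨T', h1, ?_⟩
    obtain ⟨b1, b2, b3⟩ := h2 _ _ _ i01 i02 i12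
    have hz : ∀ k, k ≠ ⟨0, hn0⟩ → k ≠ ⟨1, hn1⟩ → k ≠ ⟨2, hn2⟩ → μ k = 0 := by
      intro k k0 k1 k2
      by_contra hk
      have k0' : k.val ≠ 0 := fun h => k0 (Fin.ext h)
      have k1' : k.val ≠ 1 := fun h => k1 (Fin.ext h)
      have k2' : k.val ≠ 2 := fun h => k2 (Fin.ext h)
      have hk0 : 0 < μ k := lt_of_le_of_ne
        (hl.trans (hμ (Fin.mk_le_mk.2 (by have := k.2; omega) : k ≤ ⟨d * d - 1, hnl⟩)))
        (Ne.symm hk)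
      have : μ k ≤ μ ⟨2, hn2⟩ := hμ (by rw [Fin.le_def]; simp only; omega)
      refine four_false μ hr ⟨0, hn0⟩ ⟨1, hn1⟩ ⟨2, hn2⟩ k ⟨by simp, by simp, ?_⟩ ?_ ?_ ?_ hk
      · rw [Fin.lt_def]; simp only; omega
      · linarith
      · linarith
      · linarith
    rw [sum_three μ _ ⟨0, hn0⟩ ⟨1, hn1⟩ ⟨2, hn2⟩ (by simp) hz,
      sum_three μ _ ⟨0, hn0⟩ ⟨1, hn1⟩ ⟨2, hn2⟩ (by simp) hz]
    rify at b1 b2 b3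
    nlinarith [mul_nonneg (sub_nonneg.2 o01) (sub_nonneg.2 b1),
      mul_nonneg (sub_nonneg.2 o12) (sub_nonneg.2 b2), mul_nonneg o2 (sub_nonneg.2 b3)]
  · push Not at hl
    obtain ⟨T', h1, h2⟩ := compII hd T hn0 hn1 hnl
    refine ⟨T', h1, ?_⟩
    obtain ⟨b1, b2, b3⟩ := h2 _ _ (τ ⟨d * d - 1, hnl⟩) i01
    have hz : ∀ k, k ≠ ⟨0, hn0⟩ → k ≠ ⟨1, hn1⟩ → k ≠ ⟨d * d - 1, hnl⟩ → μ k = 0 := by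
      intro k k0 k1 k2
      by_contra hk
      have k0' : k.val ≠ 0 := fun h => k0 (Fin.ext h)
      have k1' : k.val ≠ 1 := fun h => k1 (Fin.ext h)
      have k2' : k.val ≠ d * d - 1 := fun h => k2 (Fin.ext h)
      have := k.2
      have hk0 : 0 < μ k := lt_of_le_of_ne
        (hpos.trans (hμ (Fin.mk_le_mk.2 (by omega) : k ≤ ⟨d * d - 2, by omega⟩)))
        (Ne.symm hk)
      have : μ k ≤ μ ⟨1, hn1⟩ := hμ (by rw [Fin.le_def]; simp only; omega)
      refine four_false μ hr ⟨0, hn0⟩ ⟨1, hn1⟩ k ⟨d * d - 1, hnl⟩ ⟨by simp, ?_, ?_⟩ ?_ ?_ hk ?_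
      · rw [Fin.lt_def]; simp only; omega
      · rw [Fin.lt_def]; simp only; omega
      · linarith
      · linarith
      · linarith
    have hlt : (⟨0, hn0⟩ : Fin (d * d)) < ⟨1, hn1⟩ ∧ (⟨1, hn1⟩ : Fin (d * d)) < ⟨d * d - 1, hnl⟩ := by
      simp only [Fin.lt_def]; omega
    rw [sum_three μ _ ⟨0, hn0⟩ ⟨1, hn1⟩ ⟨d * d - 1, hnl⟩ hlt hz,
      sum_three μ _ ⟨0, hn0⟩ ⟨1, hn1⟩ ⟨d * d - 1, hnl⟩ hlt hz]
    rify at b1 b2 b3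
    nlinarith [mul_nonneg (sub_nonneg.2 o01) (sub_nonneg.2 b1),
      mul_nonneg (o2.trans o12) (sub_nonneg.2 b2), mul_nonneg (neg_nonneg.2 hl.le) (sub_nonneg.2 b3)]

lemma wt_compl {d : ℕ} (T : Finset (Fin d ⊕ Fin d)) (x : Fin d × Fin d) :
    (wt Tᶜ x : ℝ) = 2 - wt T x := by
  have h2 : wt T x + wt Tᶜ x = 2 := by
    simp only [wt, Finset.mem_compl]; split_ifs <;> simp_all
  rify at h2
  linarith

lemma rev_symm {d : ℕ} (k : Fin (d * d)) :
    (finProdFinEquiv.symm k.rev : Fin d × Fin d) =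
      ((finProdFinEquiv.symm k).1.rev, (finProdFinEquiv.symm k).2.rev) := by
  obtain ⟨⟨i, s⟩, rfl⟩ := finProdFinEquiv.surjective k
  rw [Equiv.symm_apply_eq, Equiv.symm_apply_apply]
  ext
  simp only [Fin.val_rev, finProdFinEquiv_apply_val]
  obtain ⟨i, hi⟩ := i
  obtain ⟨s, hs⟩ := s
  obtain ⟨a, rfl⟩ : ∃ a, d = i + 1 + a := ⟨d - (i + 1), by omega⟩
  simp only [Nat.add_sub_cancel_left]
  have e : (i + 1 + a) * (i + 1 + a) = (i + 1 + a) * a + (i + 1 + a) * i + (i + 1 + a) := by ring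
  omega

lemma core {d : ℕ} (hd : 2 ≤ d) (μ : Fin (d * d) → ℝ) (hμ : Antitone μ)
    (hr : (Finset.univ.filter (fun k => μ k ≠ 0)).card ≤ 3)
    (T : Finset (Fin d ⊕ Fin d)) (τ : Fin (d * d) ≃ Fin d × Fin d) :
    ∃ T' : Finset (Fin d ⊕ Fin d), T'.card = T.card ∧
      ∑ k, μ k * (wt T (τ k) : ℝ) ≤ ∑ k, μ k * (wt T' (finProdFinEquiv.symm k) : ℝ) := by
  have hn : 4 ≤ d * d := by nlinarith
  by_cases hpos : 0 ≤ μ ⟨d * d - 2, by omega⟩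
  · exact core_pos hd μ hμ hr hn hpos T τ
  · push Not at hpos
    have hν : Antitone (fun k : Fin (d * d) => - μ k.rev) := by
      intro a b hab
      simp only [neg_le_neg_iff]
      exact hμ (Fin.rev_le_rev.2 hab)
    have hrν : (Finset.univ.filter (fun k : Fin (d * d) => - μ k.rev ≠ 0)).card ≤ 3 := by
      refine le_trans (le_of_eq ?_) hr
      refine Finset.card_bij (fun k _ => k.rev) ?_ ?_ ?_
      · intro a ha; simpa using ha
      · intro a _ b _ h; simpa using h
      · intro b hb; exact ⟨b.rev, by simpa using hb, by simp⟩
    have hposν : 0 ≤ - μ (Fin.rev ⟨d * d - 2, by omega⟩) := by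
      by_contra hc
      have e : (Fin.rev ⟨d * d - 2, by omega⟩ : Fin (d * d)) = ⟨1, by omega⟩ := by
        ext; simp [Fin.val_rev]; omega
      rw [e] at hc
      have h0 : μ ⟨1, by omega⟩ ≤ μ ⟨0, by omega⟩ := hμ (by simp)
      have h1 : μ ⟨d * d - 1, by omega⟩ ≤ μ ⟨d * d - 2, by omega⟩ := hμ (by simp; omega)
      refine four_false μ hr ⟨0, by omega⟩ ⟨1, by omega⟩ ⟨d * d - 2, by omega⟩
        ⟨d * d - 1, by omega⟩ ?_ ?_ ?_ ?_ ?_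
      · simp only [Fin.lt_def]; omega
      all_goals linarith
    obtain ⟨R, hR, hle⟩ := core_pos hd _ hν hrν hn hposν Tᶜ (Fin.revPerm.trans τ)
    let φ : Fin d ⊕ Fin d ≃ Fin d ⊕ Fin d := Equiv.sumCongr Fin.revPerm Fin.revPerm
    refine ⟨(R.map φ.toEmbedding)ᶜ, ?_, ?_⟩
    · rw [Finset.card_compl, Finset.card_map, hR, Finset.card_compl]
      have := Finset.card_le_univ T
      omega
    · have hw : ∀ k, wt (R.map φ.toEmbedding) (finProdFinEquiv.symm k) =
          wt R (finProdFinEquiv.symm (Fin.rev k)) := by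
        intro k
        rw [rev_symm]
        simp only [wt, Finset.mem_map_equiv]
        rfl
      have l1 : ∑ k, -μ k.rev * (wt Tᶜ ((Fin.revPerm.trans τ) k) : ℝ) =
          ∑ k, -μ k * (2 - (wt T (τ k) : ℝ)) := by
        rw [← Equiv.sum_comp Fin.revPerm]
        simp [wt_compl]
      have l2 : ∑ k, -μ k.rev * (wt R (finProdFinEquiv.symm k) : ℝ) =
          ∑ k, -μ k * (2 - (wt (R.map φ.toEmbedding)ᶜ (finProdFinEquiv.symm k) : ℝ)) := by
        rw [← Equiv.sum_comp Fin.revPerm]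
        apply Finset.sum_congr rfl
        intro k _
        rw [wt_compl, hw]
        simp
      rw [l1, l2] at hle
      simp only [mul_sub, Finset.sum_sub_distrib, neg_mul, Finset.sum_neg_distrib] at hle
      linarith

lemma herm_diag {n : Type*} [Fintype n] [DecidableEq n] {A : Matrix n n ℂ} (hA : A.IsHermitian) :
    (hA.eigenvectorUnitary : Matrix n n ℂ)ᴴ * A * (hA.eigenvectorUnitary : Matrix n n ℂ) =
      diagonal (fun i => (hA.eigenvalues i : ℂ)) := by
  have h := hA.conjStarAlgAut_star_eigenvectorUnitary
  rw [Unitary.conjStarAlgAut_apply] at h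
  simpa [star_eq_conjTranspose, Function.comp_def] using h

lemma ptrace2_conj {d : ℕ} (C : Matrix (Fin d × Fin d) (Fin d × Fin d) ℂ)
    (U V : Matrix (Fin d) (Fin d) ℂ) (hV : V * Vᴴ = 1) :
    ptrace2 ((U ⊗ₖ V)ᴴ * C * (U ⊗ₖ V)) = Uᴴ * ptrace2 C * U := by
  have hV' : ∀ t u, ∑ s, V u s * star (V t s) = if u = t then 1 else 0 := by
    intro t u
    have := congrFun (congrFun hV u) t
    simpa [Matrix.mul_apply, Matrix.one_apply] using this
  ext i j
  simp only [ptrace2, Matrix.of_apply, Matrix.mul_apply, Matrix.conjTranspose_apply,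
    Matrix.kroneckerMap_apply, Finset.sum_mul, Finset.mul_sum, Fintype.sum_prod_type]
  rw [Finset.sum_comm]
  refine Finset.sum_congr rfl fun b _ => ?_
  have : ∀ s u a t, star (U a i * V t s) * C (a, t) (b, u) * (U b j * V u s)
      = star (U a i) * C (a, t) (b, u) * U b j * (V u s * star (V t s)) := by
    intro s u a t
    rw [star_mul']; ring
  simp only [this]
  calc _ = ∑ u, ∑ a, ∑ t, ∑ s, star (U a i) * C (a, t) (b, u) * U b j * (V u s * star (V t s)) := by
        rw [Finset.sum_comm]
        refine Finset.sum_congr rfl fun u _ => ?_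
        rw [Finset.sum_comm]
        refine Finset.sum_congr rfl fun a _ => ?_
        rw [Finset.sum_comm]
    _ = ∑ u, ∑ a, star (U a i) * C (a, u) (b, u) * U b j := by
        simp only [← Finset.mul_sum, hV']
        simp
    _ = _ := by
        rw [Finset.sum_comm]

lemma ptrace1_swap {d : ℕ} (C : Matrix (Fin d × Fin d) (Fin d × Fin d) ℂ) :
    ptrace1 C = ptrace2 (C.submatrix Prod.swap Prod.swap) := rfl

lemma ptrace1_conj {d : ℕ} (C : Matrix (Fin d × Fin d) (Fin d × Fin d) ℂ)
    (U V : Matrix (Fin d) (Fin d) ℂ) (hU : U * Uᴴ = 1) :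
    ptrace1 ((U ⊗ₖ V)ᴴ * C * (U ⊗ₖ V)) = Vᴴ * ptrace1 C * V := by
  rw [ptrace1_swap, ptrace1_swap, ← ptrace2_conj _ V U hU]
  congr 1
  have h : (U ⊗ₖ V).submatrix Prod.swap Prod.swap = V ⊗ₖ U := by
    ext a b; simp [mul_comm]
  rw [← h, conjTranspose_submatrix, ← Equiv.coe_prodComm, submatrix_mul_equiv, submatrix_mul_equiv]

/-- The key reduction to diagonal arrays: a doubly stochastic matrix relates the eigenvalues. -/
lemma exists_ds {d : ℕ} (C : Matrix (Fin d × Fin d) (Fin d × Fin d) ℂ) (hC : C.IsHermitian)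
    (htr1 : (ptrace1 C).IsHermitian) (htr2 : (ptrace2 C).IsHermitian) :
    ∃ D ∈ doublyStochastic ℝ (Fin d × Fin d),
      (∀ s, htr1.eigenvalues s = ∑ i, (D *ᵥ hC.eigenvalues) (i, s)) ∧
      (∀ i, htr2.eigenvalues i = ∑ s, (D *ᵥ hC.eigenvalues) (i, s)) := by
  set U : Matrix (Fin d) (Fin d) ℂ := (htr2.eigenvectorUnitary : Matrix (Fin d) (Fin d) ℂ) with hUdef
  set V : Matrix (Fin d) (Fin d) ℂ := (htr1.eigenvectorUnitary : Matrix (Fin d) (Fin d) ℂ) with hVdef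
  set X : Matrix (Fin d × Fin d) (Fin d × Fin d) ℂ := 
    (hC.eigenvectorUnitary : Matrix (Fin d × Fin d) (Fin d × Fin d) ℂ)
  have hU : U * Uᴴ = 1 := Unitary.coe_mul_star_self htr2.eigenvectorUnitary
  have hV : V * Vᴴ = 1 := Unitary.coe_mul_star_self htr1.eigenvectorUnitary
  have hX : X * Xᴴ = 1 := Unitary.coe_mul_star_self hC.eigenvectorUnitary
  have hX' : Xᴴ * X = 1 := Unitary.coe_star_mul_self hC.eigenvectorUnitary
  have hU' : Uᴴ * U = 1 := Unitary.coe_star_mul_self htr2.eigenvectorUnitary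
  have hV' : Vᴴ * V = 1 := Unitary.coe_star_mul_self htr1.eigenvectorUnitary
  set W := U ⊗ₖ V with hWdef
  have hW : W * Wᴴ = 1 := by
    rw [hWdef, conjTranspose_kronecker, ← mul_kronecker_mul, hU, hV, one_kronecker_one]
  have hW' : Wᴴ * W = 1 := by
    rw [hWdef, conjTranspose_kronecker, ← mul_kronecker_mul, hU', hV', one_kronecker_one]
  set Z := Wᴴ * X with hZdef
  have hZ : Z * Zᴴ = 1 := by
    rw [hZdef, conjTranspose_mul, conjTranspose_conjTranspose, Matrix.mul_assoc,
      ← Matrix.mul_assoc X, hX, Matrix.one_mul, hW']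
  have hZ' : Zᴴ * Z = 1 := by
    rw [hZdef, conjTranspose_mul, conjTranspose_conjTranspose, Matrix.mul_assoc,
      ← Matrix.mul_assoc W, hW, Matrix.one_mul, hX']
  have hCX : C = X * diagonal (fun i => (hC.eigenvalues i : ℂ)) * Xᴴ := by
    rw [← herm_diag hC]
    change C = X * (Xᴴ * C * X) * Xᴴ
    rw [Matrix.mul_assoc, Matrix.mul_assoc, hX, Matrix.mul_one, ← Matrix.mul_assoc, hX,
      Matrix.one_mul]
  have hCZ : Wᴴ * C * W = Z * diagonal (fun i => (hC.eigenvalues i : ℂ)) * Zᴴ := by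
    rw [hZdef, conjTranspose_mul, conjTranspose_conjTranspose]
    conv_lhs => rw [hCX]
    simp only [Matrix.mul_assoc]
  have hdiag : ∀ x, (Wᴴ * C * W) x x =
      (((Matrix.of fun x y => Complex.normSq (Z x y)) *ᵥ hC.eigenvalues) x : ℝ) := by
    intro x
    rw [hCZ, Matrix.mul_apply]
    simp only [Matrix.mul_diagonal, Matrix.mulVec, dotProduct, Matrix.of_apply,
      Matrix.conjTranspose_apply]
    push_cast
    refine Finset.sum_congr rfl fun y _ => ?_
    rw [Complex.normSq_eq_conj_mul_self]
    simp only [RCLike.star_def]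
    ring
  refine ⟨Matrix.of fun x y => Complex.normSq (Z x y), ?_, ?_, ?_⟩
  · rw [mem_doublyStochastic_iff_sum]
    refine ⟨fun i j => Complex.normSq_nonneg _, fun i => ?_, fun j => ?_⟩
    · have := congrFun (congrFun hZ i) i
      rw [Matrix.mul_apply, Matrix.one_apply_eq] at this
      simp only [Matrix.conjTranspose_apply, RCLike.star_def, Complex.mul_conj] at this
      exact_mod_cast this
    · have := congrFun (congrFun hZ' j) j
      rw [Matrix.mul_apply, Matrix.one_apply_eq] at this
      simp only [Matrix.conjTranspose_apply, RCLike.star_def,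
        ← Complex.normSq_eq_conj_mul_self] at this
      exact_mod_cast this
  · intro s
    have h := congrFun (congrFun (ptrace1_conj C U V hU) s) s
    rw [herm_diag htr1, diagonal_apply_eq] at h
    simp only [ptrace1, Matrix.of_apply] at h
    change ∑ i, (Wᴴ * C * W) (i, s) (i, s) = _ at h
    simp only [hdiag] at h
    exact_mod_cast h.symm
  · intro i
    have h := congrFun (congrFun (ptrace2_conj C U V hV) i) i
    rw [herm_diag htr2, diagonal_apply_eq] at h
    simp only [ptrace2, Matrix.of_apply] at h
    change ∑ s, (Wᴴ * C * W) (i, s) (i, s) = _ at h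
    simp only [hdiag] at h
    exact_mod_cast h.symm

lemma sum_wt {d : ℕ} (T : Finset (Fin d ⊕ Fin d)) (c : Fin d × Fin d → ℝ) (f g : Fin d → ℝ)
    (hf : ∀ s, f s = ∑ i, c (i, s)) (hg : ∀ i, g i = ∑ s, c (i, s)) :
    ∑ t ∈ T, Sum.elim f g t = ∑ x, c x * (wt T x : ℝ) := by
  have h0 : ∑ t ∈ T, Sum.elim f g t = ∑ t, if t ∈ T then Sum.elim f g t else 0 := by simp
  rw [h0]
  simp only [Fintype.sum_sum_type, Sum.elim_inl, Sum.elim_inr, Fintype.sum_prod_type, wt]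
  push_cast
  simp only [mul_add, Finset.sum_add_distrib, hf, hg, mul_ite, mul_one, mul_zero]
  rw [add_comm]
  congr 1
  · refine Finset.sum_congr rfl fun i _ => ?_
    split_ifs <;> simp
  · rw [Finset.sum_comm]
    refine Finset.sum_congr rfl fun i _ => ?_
    split_ifs <;> simp

theorem sufficient_rank_three_square_case (d : ℕ) (hd : 2 ≤ d)
    (C : Matrix (Fin d × Fin d) (Fin d × Fin d) ℂ) (hC : C.IsHermitian)
    (hrank : C.rank ≤ 3)
    (htr1 : (ptrace1 C).IsHermitian) (htr2 : (ptrace2 C).IsHermitian)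
    -- `μ` lists the eigenvalues of `C` in decreasing order
    (μ : Fin (d * d) → ℝ) (hμ : Antitone μ)
    (g : Fin (d * d) ≃ Fin d × Fin d) (hg : ∀ k, μ k = hC.eigenvalues (g k)) :
    Majorizes (Sum.elim htr1.eigenvalues htr2.eigenvalues)
      (Sum.elim (fun s : Fin d => ∑ i : Fin d, μ (finProdFinEquiv (i, s)))
                (fun j : Fin d => ∑ s : Fin d, μ (finProdFinEquiv (j, s)))) := by
  obtain ⟨D, hD, hx1, hx2⟩ := exists_ds C hC htr1 htr2
  obtain ⟨w, hw0, hw1, hwD⟩ := exists_eq_sum_perm_of_mem_doublyStochastic hD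
  have hr : (Finset.univ.filter (fun k => μ k ≠ 0)).card ≤ 3 := by
    rw [hC.rank_eq_card_non_zero_eigs, Fintype.card_subtype] at hrank
    refine le_trans (le_of_eq ?_) hrank
    refine Finset.card_bij (fun k _ => g k) ?_ ?_ ?_
    · intro a ha; simpa [hg] using ha
    · intro a _ b _ h; simpa using h
    · intro b hb; exact ⟨g.symm b, by simpa [hg] using hb, by simp⟩
  set y : Fin d ⊕ Fin d → ℝ := Sum.elim (fun s : Fin d => ∑ i : Fin d, μ (finProdFinEquiv (i, s)))
    (fun j : Fin d => ∑ s : Fin d, μ (finProdFinEquiv (j, s))) with hy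
  have hc : ∀ x, (D *ᵥ hC.eigenvalues) x = ∑ σ, w σ * hC.eigenvalues (σ x) := by
    intro x
    rw [← hwD, Matrix.sum_mulVec, Finset.sum_apply]
    refine Finset.sum_congr rfl fun σ _ => ?_
    rw [Matrix.smul_mulVec, Matrix.permMatrix_mulVec]
    rfl
  have hX : ∀ T : Finset (Fin d ⊕ Fin d),
      ∑ t ∈ T, Sum.elim htr1.eigenvalues htr2.eigenvalues t =
        ∑ σ, w σ * ∑ k, μ k * (wt T ((g.trans σ.symm) k) : ℝ) := by
    intro T
    rw [sum_wt T _ _ _ hx1 hx2]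
    simp only [hc, Finset.sum_mul]
    rw [Finset.sum_comm]
    refine Finset.sum_congr rfl fun σ _ => ?_
    rw [Finset.mul_sum, ← Equiv.sum_comp (g.trans σ.symm)]
    refine Finset.sum_congr rfl fun k _ => ?_
    simp [hg, mul_assoc]
  have hY : ∀ T : Finset (Fin d ⊕ Fin d),
      ∑ t ∈ T, y t = ∑ k, μ k * (wt T (finProdFinEquiv.symm k) : ℝ) := by
    intro T
    rw [hy, sum_wt T (fun x => μ (finProdFinEquiv x)) _ _ (fun _ => rfl) (fun _ => rfl)]
    refine Fintype.sum_equiv finProdFinEquiv _ _ fun x => ?_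
    rw [Equiv.symm_apply_apply]
  have hbdd : ∀ k, BddAbove {s : ℝ | ∃ A : Finset (Fin d ⊕ Fin d), A.card = k ∧
      s = ∑ i ∈ A, y i} := by
    intro k
    apply Set.Finite.bddAbove
    refine (Set.finite_range (fun A : Finset (Fin d ⊕ Fin d) => ∑ i ∈ A, y i)).subset ?_
    rintro s ⟨A, _, rfl⟩
    exact ⟨A, rfl⟩
  refine ⟨fun k => ?_, ?_⟩
  · unfold maxSum
    by_cases hk : k ≤ Fintype.card (Fin d ⊕ Fin d)
    · apply csSup_le
      · obtain ⟨A, _, hA⟩ := Finset.exists_subset_card_eq (s := Finset.univ) hk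
        exact ⟨_, A, hA, rfl⟩
      · rintro s ⟨T, hT, rfl⟩
        rw [hX]
        have : ∀ σ ∈ Finset.univ, w σ * ∑ k, μ k * (wt T ((g.trans (Equiv.symm σ)) k) : ℝ) ≤
            w σ * sSup {s : ℝ | ∃ A : Finset (Fin d ⊕ Fin d), A.card = k ∧
              s = ∑ i ∈ A, y i} := by
          intro σ _
          apply mul_le_mul_of_nonneg_left _ (hw0 σ)
          obtain ⟨T', h1, h2⟩ := core hd μ hμ hr T (g.trans (Equiv.symm σ))
          rw [← hY] at h2
          exact h2.trans (le_csSup (hbdd k) ⟨T', h1.trans hT, rfl⟩)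
        refine (Finset.sum_le_sum this).trans ?_
        rw [← Finset.sum_mul, hw1, one_mul]
    · have he : ∀ z : Fin d ⊕ Fin d → ℝ, {s : ℝ | ∃ A : Finset (Fin d ⊕ Fin d), A.card = k ∧
          s = ∑ i ∈ A, z i} = ∅ := by
        intro z
        rw [Set.eq_empty_iff_forall_notMem]
        rintro s ⟨A, hA, _⟩
        exact hk (hA ▸ Finset.card_le_univ A)
      rw [he, he]
  · rw [hX, hY]
    have hu : ∀ x : Fin d × Fin d, (wt Finset.univ x : ℝ) = 2 := by
      intro x; simp [wt]
    simp only [hu]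
    rw [← Finset.sum_mul, hw1, one_mul]
end

section
/- Let d ≥ 3 and let C be a positive semidefinite matrix on ℂ^d⊗ℂ^d with rank r ≥ 4. Suppose one of the following holds: (i) r < d² and r is a perfect square; (ii) r < (d−√d)² and 0 ≠ r − ⌊√r⌋² ≤ ⌊√r⌋; (iii) r < (d−√(2d))² and r − ⌊√r⌋² > ⌊√r⌋. Then there exists a unitary U on ℂ^d⊗ℂ^d such that for every diagonal matrix D on ℂ^d⊗ℂ^d whose diagonal entries are a permutation of the eigenvalues of C (with multiplicity), the vector λ(tr_1[UCU*]) ⊕ λ(tr_2[UCU*]) is NOT majorized by λ(tr_1[D]) ⊕ λ(tr_2[D]). -/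
open Matrix Finset Kronecker
open scoped ComplexOrder

namespace ImpRanks

lemma maxSum_set_finite {ι : Type*} [Fintype ι] (x : ι → ℝ) (k : ℕ) :
    {s : ℝ | ∃ A : Finset ι, A.card = k ∧ s = ∑ i ∈ A, x i}.Finite := by
  refine (Set.finite_range (fun A : Finset ι => ∑ i ∈ A, x i)).subset ?_
  rintro s ⟨A, _, rfl⟩
  exact ⟨A, rfl⟩

lemma le_maxSum {ι : Type*} [Fintype ι] (x : ι → ℝ) (A : Finset ι) :
    ∑ i ∈ A, x i ≤ maxSum x A.card :=
  le_csSup (maxSum_set_finite x _).bddAbove ⟨A, rfl, rfl⟩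

lemma maxSum_attained {ι : Type*} [Fintype ι] (x : ι → ℝ) (k : ℕ) (hk : k ≤ Fintype.card ι) :
    ∃ A : Finset ι, A.card = k ∧ maxSum x k = ∑ i ∈ A, x i := by
  have hne : {s : ℝ | ∃ A : Finset ι, A.card = k ∧ s = ∑ i ∈ A, x i}.Nonempty := by
    obtain ⟨A, -, hA⟩ := Finset.exists_subset_card_eq (s := (Finset.univ : Finset ι)) hk
    exact ⟨_, A, hA, rfl⟩
  exact hne.csSup_mem (maxSum_set_finite x k)

lemma maxSum_le {ι : Type*} [Fintype ι] [DecidableEq ι] (P : Matrix ι ι ℝ)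
    (hP : P ∈ doublyStochastic ℝ ι) (z e : ι → ℝ) (hz : ∀ i, z i = ∑ j, P i j * e j) (k : ℕ) :
    maxSum z k ≤ maxSum e k := by
  by_cases hk : k ≤ Fintype.card ι
  · obtain ⟨A, hA, hAs⟩ := maxSum_attained z k hk
    obtain ⟨w, hw0, hw1, hw⟩ := exists_eq_sum_perm_of_mem_doublyStochastic hP
    have h1 : ∀ i, z i = ∑ σ : Equiv.Perm ι, w σ * e (σ i) := by
      intro i
      rw [hz, ← hw]
      simp only [Matrix.sum_apply, Matrix.smul_apply, Finset.sum_mul, smul_eq_mul]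
      rw [Finset.sum_comm]
      refine Finset.sum_congr rfl fun σ _ => ?_
      rw [Finset.sum_eq_single (σ i)]
      · simp [Equiv.Perm.permMatrix]
      · intro j _ hj
        simp [Equiv.Perm.permMatrix, PEquiv.toMatrix_apply, hj.symm]
      · simp
    rw [hAs]
    calc ∑ i ∈ A, z i = ∑ σ : Equiv.Perm ι, w σ * ∑ i ∈ A, e (σ i) := by
          simp only [h1, Finset.mul_sum]
          rw [Finset.sum_comm]
      _ ≤ ∑ σ : Equiv.Perm ι, w σ * maxSum e k := by
          refine Finset.sum_le_sum fun σ _ => mul_le_mul_of_nonneg_left ?_ (hw0 σ)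
          have := le_maxSum e (A.map σ.toEmbedding)
          simpa [hA] using this
      _ = maxSum e k := by rw [← Finset.sum_mul, hw1, one_mul]
  · have : ∀ x : ι → ℝ, maxSum x k = 0 := by
      intro x
      have h0 : {s : ℝ | ∃ A : Finset ι, A.card = k ∧ s = ∑ i ∈ A, x i} = ∅ := by
        ext s
        simp only [Set.mem_ofPred_eq, Set.mem_empty_iff_false, iff_false]
        rintro ⟨A, hA, -⟩
        exact hk (hA ▸ A.card_le_univ)
      rw [maxSum, h0, Real.sSup_empty]
    rw [this, this]

lemma blk_mem {m n : Type*} [Fintype m] [DecidableEq m] [Fintype n] [DecidableEq n]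
    (P : Matrix m m ℝ) (Q : Matrix n n ℝ) (hP : P ∈ doublyStochastic ℝ m)
    (hQ : Q ∈ doublyStochastic ℝ n) :
    Matrix.fromBlocks P 0 0 Q ∈ doublyStochastic ℝ (m ⊕ n) := by
  rw [mem_doublyStochastic_iff_sum] at *
  refine ⟨?_, ?_, ?_⟩
  · rintro (i | i) (j | j) <;> simp [hP.1, hQ.1]
  · rintro (i | i) <;> simp [hP.2.1, hQ.2.1]
  · rintro (i | i) <;> simp [hP.2.2, hQ.2.2]

lemma maxSum_elim_le {m n : Type*} [Fintype m] [DecidableEq m] [Fintype n] [DecidableEq n]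
    (P : Matrix m m ℝ) (Q : Matrix n n ℝ) (hP : P ∈ doublyStochastic ℝ m)
    (hQ : Q ∈ doublyStochastic ℝ n) (z e : m → ℝ) (z' e' : n → ℝ)
    (hz : ∀ i, z i = ∑ j, P i j * e j) (hz' : ∀ i, z' i = ∑ j, Q i j * e' j) (k : ℕ) :
    maxSum (Sum.elim z z') k ≤ maxSum (Sum.elim e e') k := by
  refine maxSum_le _ (blk_mem P Q hP hQ) _ _ ?_ k
  rintro (i | i) <;> simp [hz, hz']

lemma normSq_mem {m : Type*} [Fintype m] [DecidableEq m] (V : Matrix m m ℂ)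
    (hV : V ∈ Matrix.unitaryGroup m ℂ) :
    (Matrix.of fun i j => Complex.normSq (V i j)) ∈ doublyStochastic ℝ m := by
  rw [mem_doublyStochastic_iff_sum]
  refine ⟨fun i j => Complex.normSq_nonneg _, fun i => ?_, fun j => ?_⟩
  · have h := congrFun (congrFun (Matrix.mem_unitaryGroup_iff.1 hV) i) i
    simp only [Matrix.mul_apply, Matrix.star_apply, Matrix.one_apply_eq] at h
    apply Complex.ofReal_injective
    rw [← Complex.ofReal_one] at h
    rw [← h]
    push_cast
    refine Finset.sum_congr rfl fun j _ => ?_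
    exact (Complex.mul_conj _).symm
  · have h := congrFun (congrFun (Matrix.mem_unitaryGroup_iff'.1 hV) j) j
    simp only [Matrix.mul_apply, Matrix.star_apply, Matrix.one_apply_eq] at h
    apply Complex.ofReal_injective
    rw [← Complex.ofReal_one] at h
    rw [← h]
    push_cast
    refine Finset.sum_congr rfl fun j _ => ?_
    rw [mul_comm]
    exact (Complex.mul_conj _).symm

lemma conj_diag {m : Type*} [Fintype m] [DecidableEq m] (V : Matrix m m ℂ) (f : m → ℝ) (i : m) :
    (V * Matrix.diagonal (fun x => (f x : ℂ)) * Vᴴ) i i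
      = ((∑ j, Complex.normSq (V i j) * f j : ℝ) : ℂ) := by
  rw [Matrix.mul_apply]
  push_cast
  refine Finset.sum_congr rfl fun j _ => ?_
  rw [Matrix.mul_diagonal, Matrix.conjTranspose_apply, Complex.normSq_eq_conj_mul_self]
  simp only [RCLike.star_def]
  ring

/-- The diagonal is a doubly stochastic image of the eigenvalues. -/
lemma diag_eig {m : Type*} [Fintype m] [DecidableEq m] (M : Matrix m m ℂ) (hM : M.IsHermitian)
    (z : m → ℝ) (hz : ∀ i, M i i = (z i : ℂ)) :
    ∃ P ∈ doublyStochastic ℝ m, ∀ i, z i = ∑ j, P i j * hM.eigenvalues j := by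
  refine ⟨_, normSq_mem _ hM.eigenvectorUnitary.2, fun i => ?_⟩
  apply Complex.ofReal_injective
  have h := hM.spectral_theorem
  rw [Unitary.conjStarAlgAut_apply] at h
  rw [← hz]
  conv_lhs => rw [h]
  exact conj_diag _ _ i

/-- The eigenvalues of a diagonal matrix are a doubly stochastic image of the diagonal. -/
lemma eig_diag {m : Type*} [Fintype m] [DecidableEq m] (z : m → ℝ) (M : Matrix m m ℂ)
    (hM : M.IsHermitian) (hz : M = Matrix.diagonal (fun x => (z x : ℂ))) :
    ∃ P ∈ doublyStochastic ℝ m, ∀ i, hM.eigenvalues i = ∑ j, P i j * z j := by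
  have hV := (star hM.eigenvectorUnitary).2
  refine ⟨_, normSq_mem _ hV, fun i => ?_⟩
  apply Complex.ofReal_injective
  have h := hM.conjStarAlgAut_star_eigenvectorUnitary
  rw [Unitary.conjStarAlgAut_apply] at h
  have h2 := congrFun (congrFun h i) i
  rw [Matrix.diagonal_apply_eq] at h2
  have h3 := conj_diag ((star hM.eigenvectorUnitary : Matrix.unitaryGroup m ℂ) : Matrix m m ℂ) z i
  rw [← hz] at h3
  exact h2.symm.trans h3

/-- Column sums and row sums of a `d × d` array. -/
noncomputable def marg {d : ℕ} (f : Fin d × Fin d → ℝ) : Fin d ⊕ Fin d → ℝ :=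
  Sum.elim (fun s => ∑ i, f (i, s)) (fun i => ∑ s, f (i, s))

lemma rot_exists {m : Type*} [Fintype m] [DecidableEq m] (p q : m) (c s : ℝ)
    (hcs : c ^ 2 + s ^ 2 = 1) :
    ∃ R ∈ Matrix.unitaryGroup m ℂ, ∀ (f : m → ℝ) (x : m),
      (R * Matrix.diagonal (fun x => (f x : ℂ)) * Rᴴ) x x
        = ((c ^ 2 * f x + s ^ 2 * f (Equiv.swap p q x) : ℝ) : ℂ) := by
  set S : Matrix m m ℂ := (Equiv.swap p q).permMatrix ℂ with hS
  have hSS : S * S = 1 := by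
    rw [hS, ← Matrix.permMatrix_mul]
    simp
  have hSt : Sᴴ = S := by
    rw [hS, Matrix.conjTranspose_permMatrix]
    simp
  refine ⟨(c : ℂ) • (1 : Matrix m m ℂ) + (Complex.I * s) • S, ?_, ?_⟩
  · rw [Matrix.mem_unitaryGroup_iff, Matrix.star_eq_conjTranspose]
    simp only [Matrix.conjTranspose_add, Matrix.conjTranspose_smul, hSt,
      Matrix.conjTranspose_one, Matrix.add_mul, Matrix.mul_add, Matrix.smul_mul, Matrix.mul_smul,
      hSS, Matrix.one_mul, Matrix.mul_one]
    have h1 : ((c : ℂ)) ^ 2 + (s : ℂ) ^ 2 = 1 := by exact_mod_cast hcs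
    ext i j
    simp only [Matrix.add_apply, Matrix.smul_apply, smul_eq_mul, RCLike.star_def, map_mul,
      Complex.conj_I, Complex.conj_ofReal]
    linear_combination (1 : Matrix m m ℂ) i j * h1
      - (1 : Matrix m m ℂ) i j * (s : ℂ) ^ 2 * Complex.I_sq
  · intro f x
    rw [conj_diag]
    congr 1
    have h : ∀ y, Complex.normSq (((c : ℂ) • (1 : Matrix m m ℂ) + (Complex.I * s) • S) x y)
        = c ^ 2 * (if x = y then 1 else 0) + s ^ 2 * (if Equiv.swap p q x = y then 1 else 0) := by
      intro y
      simp only [hS, Matrix.add_apply, Matrix.smul_apply, Matrix.one_apply, smul_eq_mul,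
        Equiv.Perm.permMatrix, PEquiv.toMatrix_apply, Equiv.toPEquiv_apply, Option.mem_def,
        Option.some.injEq]
      split_ifs <;> simp [Complex.normSq_apply] <;> ring
    simp only [h, add_mul, Finset.sum_add_distrib, mul_assoc, ← Finset.mul_sum, ite_mul, one_mul,
      zero_mul, Finset.sum_ite_eq, Finset.mem_univ, if_true]

lemma unit_exists {m : Type*} [Fintype m] [DecidableEq m] (C : Matrix m m ℂ)
    (hC : C.IsHermitian) (g : Equiv.Perm m) (p q : m) (c s : ℝ)
    (hcs : c ^ 2 + s ^ 2 = 1) :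
    ∃ U ∈ Matrix.unitaryGroup m ℂ, ∀ x : m, (U * C * Uᴴ) x x
        = ((c ^ 2 * hC.eigenvalues (g x) + s ^ 2 * hC.eigenvalues (g (Equiv.swap p q x)) : ℝ)
            : ℂ) := by
  obtain ⟨R, hR, hRf⟩ := rot_exists p q c s hcs
  set V : Matrix m m ℂ := (hC.eigenvectorUnitary : Matrix m m ℂ) with hV
  have hVu : Vᴴ * V = 1 := Matrix.mem_unitaryGroup_iff'.1 hC.eigenvectorUnitary.2
  have hd : Vᴴ * C * V = Matrix.diagonal (fun x => (hC.eigenvalues x : ℂ)) := by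
    have h := hC.conjStarAlgAut_star_eigenvectorUnitary
    rw [Unitary.conjStarAlgAut_star_apply] at h
    exact h
  set W : Matrix m m ℂ := Vᴴ.submatrix g id with hW
  have hWs : Wᴴ = V.submatrix id g := by
    ext i j
    simp [hW]
  have hWW : W * Wᴴ = 1 := by
    rw [hWs, hW]
    refine (Matrix.submatrix_mul_equiv Vᴴ V g (Equiv.refl m) g).trans ?_
    rw [hVu, Matrix.submatrix_one_equiv]
  have hWu : W ∈ Matrix.unitaryGroup m ℂ := Matrix.mem_unitaryGroup_iff.2 hWW
  have hWd : W * C * Wᴴ = Matrix.diagonal (fun x => (hC.eigenvalues (g x) : ℂ)) := by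
    ext i j
    have h := congrFun (congrFun hd (g i)) (g j)
    have h2 : (W * C * Wᴴ) i j = (Vᴴ * C * V) (g i) (g j) := by
      rw [hWs]
      simp [Matrix.mul_apply, hW]
    rw [h2, h]
    simp [Matrix.diagonal_apply]
  refine ⟨R * W, mul_mem hR hWu, fun x => ?_⟩
  rw [← hRf (fun x => hC.eigenvalues (g x)) x, ← hWd, Matrix.conjTranspose_mul]
  simp only [Matrix.mul_assoc]

lemma ptrace1_herm {d : ℕ} {M : Matrix (Fin d × Fin d) (Fin d × Fin d) ℂ} (h : M.IsHermitian) :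
    (ptrace1 M).IsHermitian := by
  ext i j
  simp only [ptrace1, Matrix.conjTranspose_apply, Matrix.of_apply, star_sum]
  exact Finset.sum_congr rfl fun x _ => h.apply _ _

lemma ptrace2_herm {d : ℕ} {M : Matrix (Fin d × Fin d) (Fin d × Fin d) ℂ} (h : M.IsHermitian) :
    (ptrace2 M).IsHermitian := by
  ext i j
  simp only [ptrace2, Matrix.conjTranspose_apply, Matrix.of_apply, star_sum]
  exact Finset.sum_congr rfl fun x _ => h.apply _ _

/-- Lower bound: marginals of the diagonal. -/
lemma lower {d : ℕ} (M : Matrix (Fin d × Fin d) (Fin d × Fin d) ℂ)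
    (h1 : (ptrace1 M).IsHermitian) (h2 : (ptrace2 M).IsHermitian) (f : Fin d × Fin d → ℝ)
    (hf : ∀ x, M x x = (f x : ℂ)) (k : ℕ) :
    maxSum (marg f) k ≤ maxSum (Sum.elim h1.eigenvalues h2.eigenvalues) k := by
  obtain ⟨P, hP, hP'⟩ := diag_eig _ h1 (fun s => ∑ i, f (i, s)) (by intro i; simp [ptrace1, hf])
  obtain ⟨Q, hQ, hQ'⟩ := diag_eig _ h2 (fun i => ∑ s, f (i, s)) (by intro i; simp [ptrace2, hf])
  exact maxSum_elim_le P Q hP hQ _ _ _ _ hP' hQ' k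

/-- Upper bound for diagonal matrices. -/
lemma upper {d : ℕ} (D : Matrix (Fin d × Fin d) (Fin d × Fin d) ℂ) (hD : D.IsDiag)
    (h1 : (ptrace1 D).IsHermitian) (h2 : (ptrace2 D).IsHermitian) (f : Fin d × Fin d → ℝ)
    (hf : ∀ x, D x x = (f x : ℂ)) (k : ℕ) :
    maxSum (Sum.elim h1.eigenvalues h2.eigenvalues) k ≤ maxSum (marg f) k := by
  obtain ⟨P, hP, hP'⟩ := eig_diag (fun s => ∑ i, f (i, s)) _ h1 (by
    ext i j
    by_cases hij : i = j
    · subst hij; simp [ptrace1, hf]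
    · rw [Matrix.diagonal_apply_ne _ hij]
      simp only [ptrace1, Matrix.of_apply]
      exact Finset.sum_eq_zero fun x _ => hD (by simp [hij]))
  obtain ⟨Q, hQ, hQ'⟩ := eig_diag (fun i => ∑ s, f (i, s)) _ h2 (by
    ext i j
    by_cases hij : i = j
    · subst hij; simp [ptrace2, hf]
    · rw [Matrix.diagonal_apply_ne _ hij]
      simp only [ptrace2, Matrix.of_apply]
      exact Finset.sum_eq_zero fun x _ => hD (by simp [hij]))
  exact maxSum_elim_le P Q hP hQ _ _ _ _ hP' hQ' k

/-- The arithmetic consequences of the rank hypotheses. -/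
lemma numeric (d r : ℕ) (hd : 3 ≤ d) (hr : 4 ≤ r)
    (hcase :
      (r < d * d ∧ IsSquare r) ∨
      ((r : ℝ) < ((d : ℝ) - Real.sqrt d) ^ 2 ∧
        r - Nat.sqrt r ^ 2 ≠ 0 ∧ r - Nat.sqrt r ^ 2 ≤ Nat.sqrt r) ∨
      ((r : ℝ) < ((d : ℝ) - Real.sqrt (2 * d)) ^ 2 ∧
        Nat.sqrt r < r - Nat.sqrt r ^ 2)) :
    ∃ a b : ℕ, a ≤ d ∧ b ≤ d ∧ r ≤ a * b ∧ a + b < r + 1 ∧ d * (a + b) < d * d + r := by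
  have hdR : (3 : ℝ) ≤ d := by exact_mod_cast hd
  have key : ∀ (t : ℝ) (N n : ℕ), 0 ≤ t → t < d → (r : ℝ) < ((d : ℝ) - Real.sqrt (t * d)) ^ 2 →
      n * n ≤ r → (N : ℝ) ≤ 2 * n + t → d * N < d * d + r ∧ n < d := by
    intro t N n ht htd h hn hN
    have hnR : (n : ℝ) * n ≤ r := by exact_mod_cast hn
    have hu : Real.sqrt (t * d) ^ 2 = t * d := Real.sq_sqrt (by positivity)
    have hu0 := Real.sqrt_nonneg (t * d)
    set u := Real.sqrt (t * d)
    have hud : u < d := by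
      by_contra hc
      push Not at hc
      nlinarith
    have hv : Real.sqrt r ^ 2 = r := Real.sq_sqrt (by positivity)
    have hv0 := Real.sqrt_nonneg (r : ℝ)
    set v := Real.sqrt r
    have hv1 : v < d - u := by
      by_contra hc
      push Not at hc
      nlinarith
    have hnv : (n : ℝ) ≤ v := by
      by_contra hc
      push Not at hc
      nlinarith
    constructor
    · have : (d : ℝ) * N < d * d + r := by
        have h1 : (d : ℝ) * N ≤ d * (2 * v + t) := by
          apply mul_le_mul_of_nonneg_left _ (by positivity)
          linarith
        nlinarith
      exact_mod_cast this
    · have : (n : ℝ) < d := by linarith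
      exact_mod_cast this
  have hs1 := Nat.sqrt_le' r
  have hs2 := Nat.lt_succ_sqrt r
  have hs3 : 2 ≤ Nat.sqrt r := by
    rw [Nat.le_sqrt]; omega
  rcases hcase with ⟨h1, n, hn⟩ | ⟨h1, h2, h3⟩ | ⟨h1, h2⟩
  · have hnd : n < d := by
      by_contra hc
      push Not at hc
      nlinarith
    have hn2 : 2 ≤ n := by
      by_contra hc
      push Not at hc
      nlinarith
    exact ⟨n, n, hnd.le, hnd.le, hn.le, by nlinarith, by nlinarith [sq_nonneg ((d : ℤ) - n), mul_pos (Nat.sub_pos_of_lt hnd) (Nat.sub_pos_of_lt hnd), Nat.sub_add_cancel hnd.le]⟩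
  · set n := Nat.sqrt r
    obtain ⟨h4, h5⟩ := key 1 (n + (n + 1)) n (by norm_num) (by linarith) (by simpa using h1)
      (by nlinarith) (by push_cast; linarith)
    have hr1 : n ^ 2 < r := by omega
    have hr2 : r ≤ n ^ 2 + n := by omega
    exact ⟨n, n + 1, h5.le, h5, by nlinarith, by nlinarith, h4⟩
  · set n := Nat.sqrt r
    obtain ⟨h4, h5⟩ := key 2 ((n + 1) + (n + 1)) n (by norm_num) (by linarith) h1
      (by nlinarith) (by push_cast; linarith)
    have hr1 : n ^ 2 + n < r := by omega
    exact ⟨n + 1, n + 1, h5, h5, hs2.le, by nlinarith, h4⟩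

/-- The set of positions on a column (`inl`) or a row (`inr`). -/
def line {d : ℕ} : Fin d ⊕ Fin d → Finset (Fin d × Fin d)
  | Sum.inl s => Finset.univ.filter fun x => x.2 = s
  | Sum.inr i => Finset.univ.filter fun x => x.1 = i

lemma marg_eq {d : ℕ} (f : Fin d × Fin d → ℝ) (I : Fin d ⊕ Fin d) :
    marg f I = ∑ x ∈ line I, f x := by
  rcases I with s | i
  · simp [marg, line, Finset.sum_filter, Fintype.sum_prod_type]
  · simp only [marg, line, Finset.sum_filter, Fintype.sum_prod_type, Sum.elim_inr]
    rw [Finset.sum_comm]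
    simp

lemma sum_marg {d : ℕ} (f : Fin d × Fin d → ℝ) : ∑ J, marg f J = 2 * ∑ x, f x := by
  rw [Fintype.sum_sum_type]
  simp only [marg, Sum.elim_inl, Sum.elim_inr]
  rw [Finset.sum_comm, ← Fintype.sum_prod_type', two_mul]

lemma marg_nonneg {d : ℕ} (f : Fin d × Fin d → ℝ) (hf : ∀ x, 0 ≤ f x) (J : Fin d ⊕ Fin d) :
    0 ≤ marg f J := by
  rw [marg_eq]
  exact Finset.sum_nonneg fun x _ => hf x

/-- If some `A` carries all the marginal mass then the support lies in the box of `A`. -/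
lemma supp_box {d : ℕ} (f : Fin d × Fin d → ℝ) (hf : ∀ x, 0 ≤ f x) (A : Finset (Fin d ⊕ Fin d))
    (hA : ∑ J ∈ A, marg f J = 2 * ∑ x, f x) (x : Fin d × Fin d) (hx : f x ≠ 0) :
    Sum.inl x.2 ∈ A ∧ Sum.inr x.1 ∈ A := by
  have h0 : ∀ J, J ∉ A → marg f J = 0 := by
    intro J hJ
    have h1 : ∑ J ∈ Aᶜ, marg f J = 0 := by
      have := Finset.sum_add_sum_compl A (marg f)
      rw [sum_marg] at this
      linarith
    exact (Finset.sum_eq_zero_iff_of_nonneg (fun J _ => marg_nonneg f hf J)).1 h1 J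
      (Finset.mem_compl.2 hJ)
  have h2 : ∀ J, x ∈ line J → J ∈ A := by
    intro J hJ
    by_contra hc
    have := h0 J hc
    rw [marg_eq, Finset.sum_eq_zero_iff_of_nonneg (fun y _ => hf y)] at this
    exact hx (this x hJ)
  exact ⟨h2 _ (by simp [line]), h2 _ (by simp [line])⟩

/-- Counting contradiction: an array whose heaviest line is filled greedily is not optimally
packed. -/
lemma count_aux {d r : ℕ} (f : Fin d × Fin d → ℝ) (hf : ∀ x, 0 ≤ f x)
    (hr0 : 1 ≤ r) (hr : (Finset.univ.filter fun x => f x ≠ 0).card = r)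
    (A : Finset (Fin d ⊕ Fin d)) (hA : ∑ J ∈ A, marg f J = 2 * ∑ x, f x)
    (I : Fin d ⊕ Fin d) (hI : ∀ p ∈ line I, ∀ q, q ∉ line I → f q ≤ f p) :
    r + 1 ≤ A.card ∨ d * d + r ≤ d * A.card := by
  have hbox := supp_box f hf A hA
  have hcard := Finset.card_toLeft_add_card_toRight (u := A)
  have hprod : r ≤ A.toRight.card * A.toLeft.card := by
    rw [← hr, ← Finset.card_product]
    apply Finset.card_le_card
    intro x hx
    have := hbox x (by simpa using hx)
    simp [Finset.mem_product, this.1, this.2]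
  have hL : A.toLeft.card ≤ d := by simpa using Finset.card_le_univ A.toLeft
  have hR : A.toRight.card ≤ d := by simpa using Finset.card_le_univ A.toRight
  by_cases hfull : ∀ p ∈ line I, f p ≠ 0
  · right
    rcases I with s | i
    · have : A.toRight = Finset.univ := by
        ext j
        simpa using (hbox (j, s) (hfull _ (by simp [line]))).2
      have h2 : A.toRight.card = d := by rw [this]; simp
      rw [← hcard, h2]
      rw [h2] at hprod
      nlinarith
    · have : A.toLeft = Finset.univ := by
        ext j
        simpa using (hbox (i, j) (hfull _ (by simp [line]))).1
      have h2 : A.toLeft.card = d := by rw [this]; simp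
      rw [← hcard, h2]
      rw [h2] at hprod
      nlinarith
  · left
    push Not at hfull
    obtain ⟨p, hp, hp0⟩ := hfull
    have hsup : ∀ x, f x ≠ 0 → x ∈ line I := by
      intro x hx
      by_contra hc
      exact hx (le_antisymm (hp0 ▸ hI p hp x hc) (hf x))
    have hpos : 0 < A.toRight.card * A.toLeft.card := by omega
    have hR0 : 0 < A.toRight.card := Nat.pos_of_mul_pos_right hpos
    have hL0 : 0 < A.toLeft.card := Nat.pos_of_mul_pos_left hpos
    rcases I with s | i
    · have : r ≤ A.toRight.card := by
        rw [← hr]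
        refine Finset.card_le_card_of_injOn Prod.fst ?_ ?_
        · intro x hx
          simpa using (hbox x (by simpa using hx)).2
        · intro x hx y hy hxy
          have h1 := hsup x (by simpa using hx)
          have h2 := hsup y (by simpa using hy)
          simp only [line, Finset.mem_filter, Finset.mem_univ, true_and] at h1 h2
          exact Prod.ext hxy (h1.trans h2.symm)
      omega
    · have : r ≤ A.toLeft.card := by
        rw [← hr]
        refine Finset.card_le_card_of_injOn Prod.snd ?_ ?_
        · intro x hx
          simpa using (hbox x (by simpa using hx)).1
        · intro x hx y hy hxy
          have h1 := hsup x (by simpa using hx)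
          have h2 := hsup y (by simpa using hy)
          simp only [line, Finset.mem_filter, Finset.mem_univ, true_and] at h1 h2
          exact Prod.ext (h1.trans h2.symm) hxy
      omega

lemma maxSum_marg_le {d : ℕ} (f : Fin d × Fin d → ℝ) (hf : ∀ x, 0 ≤ f x) (k : ℕ)
    (hk : k ≤ d + d) : maxSum (marg f) k ≤ 2 * ∑ x, f x := by
  obtain ⟨A, -, hA⟩ := maxSum_attained (marg f) k (by simpa using hk)
  rw [hA, ← sum_marg]
  exact Finset.sum_le_univ_sum_of_nonneg (marg_nonneg f hf)

/-- The support can be packed into a box. -/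
lemma pack {d r a b : ℕ} (l : Fin d × Fin d → ℝ) (hl : ∀ x, 0 ≤ l x)
    (hr : (Finset.univ.filter fun x => l x ≠ 0).card = r) (ha : a ≤ d) (hb : b ≤ d)
    (hab : r ≤ a * b) :
    ∃ g : Equiv.Perm (Fin d × Fin d), maxSum (marg fun x => l (g x)) (a + b) = 2 * ∑ x, l x := by
  obtain ⟨Ra, -, hRa⟩ := Finset.exists_subset_card_eq (s := (Finset.univ : Finset (Fin d)))
    (n := a) (by simpa using ha)
  obtain ⟨Cb, -, hCb⟩ := Finset.exists_subset_card_eq (s := (Finset.univ : Finset (Fin d)))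
    (n := b) (by simpa using hb)
  obtain ⟨B, hB, hBr⟩ := Finset.exists_subset_card_eq (s := Ra ×ˢ Cb) (n := r)
    (by rw [Finset.card_product, hRa, hCb]; exact hab)
  have e : {x // x ∈ B} ≃ {x // l x ≠ 0} := by
    refine Fintype.equivOfCardEq ?_
    rw [Fintype.card_coe, hBr, ← hr, Fintype.card_subtype]
  refine ⟨e.extendSubtype, ?_⟩
  set g := e.extendSubtype
  have hg : ∀ x, x ∉ B → l (g x) = 0 := by
    intro x hx
    have := e.extendSubtype_not_mem x hx
    simpa using this
  have hsum : ∑ x, l (g x) = ∑ x, l x := Equiv.sum_comp g l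
  apply le_antisymm
  · rw [← hsum]
    exact maxSum_marg_le _ (fun x => hl _) _ (by omega)
  · have h := le_maxSum (marg fun x => l (g x)) (Cb.disjSum Ra)
    rw [Finset.card_disjSum, hRa, hCb, add_comm b a] at h
    refine le_trans (le_of_eq ?_) h
    rw [← hsum, ← sum_marg]
    symm
    apply Finset.sum_subset (Finset.subset_univ _)
    rintro J - hJ
    rw [marg_eq]
    refine Finset.sum_eq_zero fun x hx => hg x fun hxB => hJ ?_
    have h3 := Finset.mem_product.1 (hB hxB)
    rcases J with s | i
    · simp only [line, Finset.mem_filter, Finset.mem_univ, true_and] at hx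
      simpa [← hx] using h3.2
    · simp only [line, Finset.mem_filter, Finset.mem_univ, true_and] at hx
      simpa [← hx] using h3.1

/-- The combinatorial core. -/
lemma core {d r a b : ℕ} (hd : 1 ≤ d) (l : Fin d × Fin d → ℝ) (hl : ∀ x, 0 ≤ l x) (hr0 : 1 ≤ r)
    (hr : (Finset.univ.filter fun x => l x ≠ 0).card = r) (ha : a ≤ d) (hb : b ≤ d)
    (hab : r ≤ a * b) (h1 : a + b < r + 1) (h2 : d * (a + b) < d * d + r)
    (H : ∀ (g : Equiv.Perm (Fin d × Fin d)) (p q : Fin d × Fin d) (ε : ℝ), 0 ≤ ε → ε ≤ 1 →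
      ∃ g' : Equiv.Perm (Fin d × Fin d), ∀ k,
        maxSum (marg fun x => (1 - ε) * l (g x) + ε * l (g (Equiv.swap p q x))) k
          ≤ maxSum (marg fun x => l (g' x)) k) : False := by
  classical
  set T := 2 * ∑ x, l x with hT
  set N := a + b with hN
  have hNd : N ≤ d + d := by omega
  let G : Finset (Equiv.Perm (Fin d × Fin d)) :=
    Finset.univ.filter fun g => maxSum (marg fun x => l (g x)) N = T
  have hG : G.Nonempty := by
    obtain ⟨g, hg⟩ := pack l hl hr ha hb hab
    exact ⟨g, by simpa [G] using hg⟩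
  obtain ⟨g, hgG, hgmax⟩ := Finset.exists_max_image G
    (fun g => maxSum (marg fun x => l (g x)) 1) hG
  have hgT : maxSum (marg fun x => l (g x)) N = T := by simpa [G] using hgG
  set f : Fin d × Fin d → ℝ := fun x => l (g x) with hf
  have hf0 : ∀ x, 0 ≤ f x := fun x => hl _
  have hsum : ∀ g : Equiv.Perm (Fin d × Fin d), ∑ x, l (g x) = ∑ x, l x :=
    fun g => Equiv.sum_comp g l
  obtain ⟨A, hAc, hA⟩ := maxSum_attained (marg f) N (by simpa using hNd)
  obtain ⟨A1, hA1c, hA1⟩ := maxSum_attained (marg f) 1 (by simp; omega)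
  obtain ⟨I, rfl⟩ := Finset.card_eq_one.1 hA1c
  rw [Finset.sum_singleton] at hA1
  have halign : ∀ p ∈ line I, ∀ q, q ∉ line I → f q ≤ f p := by
    intro p hp q hq
    by_contra hlt
    push Not at hlt
    -- a small parameter
    have hev : ∀ᶠ ε : ℝ in nhdsWithin 0 (Set.Ioi 0), ∀ g' : Equiv.Perm (Fin d × Fin d),
        g' ∉ G → maxSum (marg fun x => l (g' x)) N < (1 - ε) * T := by
      rw [Filter.eventually_all]
      intro g'
      by_cases hg' : g' ∈ G
      · simp [hg']
      · have hlt' : maxSum (marg fun x => l (g' x)) N < T := by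
          refine lt_of_le_of_ne ?_ (by simpa [G] using hg')
          rw [hT, ← hsum g']
          exact maxSum_marg_le _ (fun x => hl _) _ hNd
        have ht : Filter.Tendsto (fun ε : ℝ => (1 - ε) * T) (nhdsWithin 0 (Set.Ioi 0))
            (nhds ((1 - 0) * T)) :=
          ((by fun_prop : Continuous fun ε : ℝ => (1 - ε) * T).tendsto 0).mono_left
            nhdsWithin_le_nhds
        rw [sub_zero, one_mul] at ht
        filter_upwards [ht.eventually (lt_mem_nhds hlt')] with ε hε _ using hε
    have hev2 : ∀ᶠ ε : ℝ in nhdsWithin 0 (Set.Ioi 0), ε ∈ Set.Ioo (0 : ℝ) 1 :=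
      Ioo_mem_nhdsGT one_pos
    obtain ⟨ε, hε, hε0, hε1⟩ := (hev.and hev2).exists
    obtain ⟨g', hg'⟩ := H g p q ε hε0.le hε1.le
    set m : Fin d × Fin d → ℝ :=
      fun x => (1 - ε) * l (g x) + ε * l (g (Equiv.swap p q x)) with hm
    have hmarg : ∀ J, marg m J = (1 - ε) * marg f J + ε * marg (fun x => f (Equiv.swap p q x)) J := by
      intro J
      simp only [marg_eq, hm, hf, Finset.sum_add_distrib, Finset.mul_sum]
    have hg'G : g' ∈ G := by
      by_contra hc
      have h3 := hε g' hc
      have h4 := hg' N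
      have h5 := le_maxSum (marg m) A
      rw [hAc] at h5
      have h6 : (1 - ε) * T ≤ ∑ J ∈ A, marg m J := by
        simp only [hmarg, Finset.sum_add_distrib, ← Finset.mul_sum]
        rw [← hA, hgT]
        have : 0 ≤ ∑ J ∈ A, marg (fun x => f (Equiv.swap p q x)) J :=
          Finset.sum_nonneg fun J _ => marg_nonneg _ (fun x => hf0 _) J
        nlinarith
      linarith
    have h7 := hgmax g' hg'G
    have h8 := hg' 1
    have h9 := le_maxSum (marg m) {I}
    rw [Finset.sum_singleton, Finset.card_singleton, hmarg] at h9
    have h10 : marg (fun x => f (Equiv.swap p q x)) I = marg f I - f p + f q := by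
      rw [marg_eq, marg_eq, ← Finset.add_sum_erase _ _ hp, ← Finset.add_sum_erase _ f hp,
        Equiv.swap_apply_left]
      have : ∑ x ∈ (line I).erase p, f (Equiv.swap p q x) = ∑ x ∈ (line I).erase p, f x := by
        refine Finset.sum_congr rfl fun x hx => ?_
        rw [Equiv.swap_apply_of_ne_of_ne (Finset.ne_of_mem_erase hx)]
        rintro rfl
        exact hq (Finset.mem_of_mem_erase hx)
      rw [this]
      ring
    rw [h10] at h9
    have h11 : 0 < ε * (f q - f p) := mul_pos hε0 (by linarith)
    have h7' : maxSum (marg fun x => l (g' x)) 1 ≤ marg f I := by rw [← hA1]; exact h7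
    nlinarith
  have hrf : (Finset.univ.filter fun x => f x ≠ 0).card = r := by
    rw [← hr]
    refine Finset.card_bij (fun x _ => g x) ?_ (fun x _ y _ h => g.injective h) ?_
    · intro x hx
      simpa [hf] using hx
    · intro y hy
      exact ⟨g.symm y, by simpa [hf] using hy, by simp⟩
  have hAT : ∑ J ∈ A, marg f J = 2 * ∑ x, f x := by
    rw [← hA, hgT, hT, hf, hsum g]
  rcases count_aux f hf0 hr0 hrf A hAT I halign with h | h
  · omega
  · rw [hAc] at h; omega

end ImpRanks


theorem impossible_ranks (d : ℕ) (hd : 3 ≤ d)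
    (C : Matrix (Fin d × Fin d) (Fin d × Fin d) ℂ) (hC : C.PosSemidef)
    (hr : 4 ≤ C.rank)
    (hcase :
      (C.rank < d * d ∧ IsSquare C.rank) ∨
      ((C.rank : ℝ) < ((d : ℝ) - Real.sqrt d) ^ 2 ∧
        C.rank - Nat.sqrt C.rank ^ 2 ≠ 0 ∧ C.rank - Nat.sqrt C.rank ^ 2 ≤ Nat.sqrt C.rank) ∨
      ((C.rank : ℝ) < ((d : ℝ) - Real.sqrt (2 * d)) ^ 2 ∧
        Nat.sqrt C.rank < C.rank - Nat.sqrt C.rank ^ 2)) :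
    ∃ U : Matrix (Fin d × Fin d) (Fin d × Fin d) ℂ,
      U ∈ Matrix.unitaryGroup (Fin d × Fin d) ℂ ∧
      ∀ D : Matrix (Fin d × Fin d) (Fin d × Fin d) ℂ, D.IsDiag →
        (∃ g : Equiv.Perm (Fin d × Fin d), ∀ p, D p p = (hC.1.eigenvalues (g p) : ℂ)) →
        ∀ (hU1 : (ptrace1 (U * C * Uᴴ)).IsHermitian)
          (hU2 : (ptrace2 (U * C * Uᴴ)).IsHermitian)
          (hD1 : (ptrace1 D).IsHermitian) (hD2 : (ptrace2 D).IsHermitian),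
          ¬ Majorizes (Sum.elim hU1.eigenvalues hU2.eigenvalues)
              (Sum.elim hD1.eigenvalues hD2.eigenvalues) := by
  obtain ⟨a, b, ha, hb, hab, h1, h2⟩ := ImpRanks.numeric d C.rank hd hr hcase
  by_contra hneg
  push Not at hneg
  refine ImpRanks.core (r := C.rank) (by omega) hC.1.eigenvalues hC.eigenvalues_nonneg (by omega)
    ?_ ha hb hab h1 h2 ?_
  · rw [hC.1.rank_eq_card_non_zero_eigs, Fintype.card_subtype]
  · intro g p q ε hε0 hε1
    have e1 : Real.sqrt (1 - ε) ^ 2 = 1 - ε := Real.sq_sqrt (by linarith)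
    have e2 : Real.sqrt ε ^ 2 = ε := Real.sq_sqrt hε0
    obtain ⟨U, hU, hUd⟩ := ImpRanks.unit_exists C hC.1 g p q (Real.sqrt (1 - ε)) (Real.sqrt ε)
      (by rw [e1, e2]; ring)
    rw [e1, e2] at hUd
    obtain ⟨D, hD, ⟨g', hg'⟩, hU1, hU2, hD1, hD2, hmaj⟩ := hneg U hU
    exact ⟨g', fun k => (ImpRanks.lower _ hU1 hU2 _ hUd k).trans
      ((hmaj.1 k).trans (ImpRanks.upper D hD hD1 hD2 _ hg' k))⟩
end

section
/- Let d ≥ 24 and let C be a positive semidefinite matrix on ℂ^d⊗ℂ^d of rank r whose spectrum is (λ, …, λ, 0, …, 0) with exactly r copies of some λ > 0. Then the following are equivalent: (a) there exists a diagonal matrix D on ℂ^d⊗ℂ^d whose diagonal entries are a permutation of the eigenvalues of C (with multiplicity) such that for every unitary U on ℂ^d⊗ℂ^d, λ(tr_1[UCU*]) ⊕ λ(tr_2[UCU*]) ≺ λ(tr_1[D]) ⊕ λ(tr_2[D]); (b) r ≤ 3 or r ≥ d² − 3. -/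
open Matrix Finset Kronecker
open scoped ComplexOrder

namespace FlatSpec

noncomputable def rc {d : ℕ} (p : Fin d × Fin d → ℝ) : Fin d ⊕ Fin d → ℝ :=
  Sum.elim (fun t => ∑ i, p (i, t)) (fun i => ∑ s, p (i, s))

noncomputable def ind {d : ℕ} (l : ℝ) (S : Finset (Fin d × Fin d)) : Fin d × Fin d → ℝ :=
  fun p => if p ∈ S then l else 0

lemma rc_sum {d : ℕ} (p : Fin d × Fin d → ℝ) (A B : Finset (Fin d)) :
    ∑ x ∈ B.disjSum A, rc p x = ∑ c, p c + ∑ c ∈ A ×ˢ B, p c - ∑ c ∈ Aᶜ ×ˢ Bᶜ, p c := by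
  classical
  rw [Finset.sum_disjSum]
  simp only [rc, Sum.elim_inl, Sum.elim_inr]
  have h1 : ∑ t ∈ B, ∑ i, p (i, t) = ∑ c ∈ (univ ×ˢ B : Finset (Fin d × Fin d)), p c := by
    rw [Finset.sum_product_right]
  have h2 : ∑ i ∈ A, ∑ s, p (i, s) = ∑ c ∈ (A ×ˢ univ : Finset (Fin d × Fin d)), p c := by
    rw [Finset.sum_product]
  rw [h1, h2]
  have e : ∀ F : Finset (Fin d × Fin d), ∑ c ∈ F, p c = ∑ c, if c ∈ F then p c else 0 := by
    intro F; simp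
  rw [e (univ ×ˢ B), e (A ×ˢ univ), e (A ×ˢ B), e (Aᶜ ×ˢ Bᶜ), ← Finset.sum_add_distrib,
    ← Finset.sum_add_distrib, ← Finset.sum_sub_distrib]
  apply Finset.sum_congr rfl
  rintro ⟨i, j⟩ _
  simp only [Finset.mem_product, Finset.mem_univ, Finset.mem_compl, true_and, and_true]
  by_cases hi : i ∈ A <;> by_cases hj : j ∈ B <;> simp [hi, hj]

lemma rc_total {d : ℕ} (p : Fin d × Fin d → ℝ) : ∑ x, rc p x = 2 * ∑ c, p c := by
  rw [Fintype.sum_sum_type]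
  simp only [rc, Sum.elim_inl, Sum.elim_inr]
  rw [Fintype.sum_prod_type p]
  rw [Finset.sum_comm]; ring

lemma exists_disjSum {d : ℕ} (X : Finset (Fin d ⊕ Fin d)) :
    ∃ A B : Finset (Fin d), X = B.disjSum A :=
  ⟨X.toRight, X.toLeft, (Finset.toLeft_disjSum_toRight).symm⟩

lemma rc_nonneg {d : ℕ} {p : Fin d × Fin d → ℝ} (h : ∀ c, 0 ≤ p c) (x) : 0 ≤ rc p x := by
  rcases x with x | x
  · exact Finset.sum_nonneg (s := univ) (f := fun i => p (i, x)) (fun i _ => h (i, x))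
  · exact Finset.sum_nonneg (s := univ) (f := fun i => p (x, i)) (fun i _ => h (x, i))

lemma sum_ind {d : ℕ} (l : ℝ) (S : Finset (Fin d × Fin d)) : ∑ c, ind l S c = S.card * l := by
  simp [ind]

/-- upper bounds -/
lemma rc_bound1 {d : ℕ} {p : Fin d × Fin d → ℝ} {l : ℝ} (h : ∀ c, 0 ≤ p c) (h2 : ∀ c, p c ≤ l)
    (A B : Finset (Fin d)) :
    ∑ x ∈ B.disjSum A, rc p x ≤ ∑ c, p c + (A.card * B.card : ℕ) * l := by
  rw [rc_sum]
  have : ∑ c ∈ A ×ˢ B, p c ≤ ∑ c ∈ A ×ˢ B, l := Finset.sum_le_sum (fun c _ => h2 c)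
  rw [Finset.sum_const, Finset.card_product, nsmul_eq_mul] at this
  have : 0 ≤ ∑ c ∈ Aᶜ ×ˢ Bᶜ, p c := Finset.sum_nonneg (fun c _ => h c)
  linarith

lemma rc_bound2 {d : ℕ} {p : Fin d × Fin d → ℝ} (h : ∀ c, 0 ≤ p c)
    (X : Finset (Fin d ⊕ Fin d)) : ∑ x ∈ X, rc p x ≤ 2 * ∑ c, p c := by
  rw [← rc_total]
  exact Finset.sum_le_univ_sum_of_nonneg (rc_nonneg h)

lemma maxSum_le {ι κ : Type*} [Fintype ι] [Fintype κ] (x : ι → ℝ) (y : κ → ℝ) (k : ℕ)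
    (hc : Fintype.card ι = Fintype.card κ)
    (h : ∀ A : Finset ι, A.card = k → ∃ B : Finset κ, B.card = k ∧ ∑ i ∈ A, x i ≤ ∑ i ∈ B, y i) :
    maxSum x k ≤ maxSum y k := by
  have bdd : BddAbove {s : ℝ | ∃ A : Finset κ, A.card = k ∧ s = ∑ i ∈ A, y i} := by
    apply Set.Finite.bddAbove
    apply (Set.finite_range (fun A : Finset κ => ∑ i ∈ A, y i)).subset
    rintro s ⟨A, -, rfl⟩; exact ⟨A, rfl⟩
  by_cases hk : k ≤ Fintype.card ι
  · apply csSup_le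
    · obtain ⟨A, -, hA⟩ := Finset.exists_subset_card_eq (s := (univ : Finset ι)) (n := k) hk
      exact ⟨_, A, hA, rfl⟩
    · rintro s ⟨A, hA, rfl⟩
      obtain ⟨B, hB, hAB⟩ := h A hA
      exact hAB.trans (le_csSup bdd ⟨B, hB, rfl⟩)
  · have e1 : {s : ℝ | ∃ A : Finset ι, A.card = k ∧ s = ∑ i ∈ A, x i} = ∅ := by
      ext s; simp only [Set.mem_ofPred_eq, Set.mem_empty_iff_false, iff_false]
      rintro ⟨A, hA, -⟩; have := Finset.card_le_univ A; omega
    have e2 : {s : ℝ | ∃ A : Finset κ, A.card = k ∧ s = ∑ i ∈ A, y i} = ∅ := by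
      ext s; simp only [Set.mem_ofPred_eq, Set.mem_empty_iff_false, iff_false]
      rintro ⟨A, hA, -⟩; have := Finset.card_le_univ A; omega
    simp [maxSum, e1, e2]

lemma exists_of_maxSum_le {ι κ : Type*} [Fintype ι] [Fintype κ] (x : ι → ℝ) (y : κ → ℝ) (k : ℕ)
    (h : maxSum x k ≤ maxSum y k) (hk : k ≤ Fintype.card κ) (A : Finset ι) (hA : A.card = k) :
    ∃ B : Finset κ, B.card = k ∧ ∑ i ∈ A, x i ≤ ∑ i ∈ B, y i := by
  have fin : ∀ {κ : Type _} [Fintype κ] (y : κ → ℝ),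
      {s : ℝ | ∃ A : Finset κ, A.card = k ∧ s = ∑ i ∈ A, y i}.Finite := by
    intro κ _ y
    apply (Set.finite_range (fun A : Finset κ => ∑ i ∈ A, y i)).subset
    rintro s ⟨A, -, rfl⟩; exact ⟨A, rfl⟩
  have fin' : {s : ℝ | ∃ A : Finset ι, A.card = k ∧ s = ∑ i ∈ A, x i}.Finite := by
    apply (Set.finite_range (fun A : Finset ι => ∑ i ∈ A, x i)).subset
    rintro s ⟨A, -, rfl⟩; exact ⟨A, rfl⟩
  have ne : {s : ℝ | ∃ A : Finset κ, A.card = k ∧ s = ∑ i ∈ A, y i}.Nonempty := by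
    obtain ⟨A, -, hA⟩ := Finset.exists_subset_card_eq (s := (univ : Finset κ)) (n := k) hk
    exact ⟨_, A, hA, rfl⟩
  obtain ⟨B, hB, hs⟩ := ne.csSup_mem (fin y)
  refine ⟨B, hB, ?_⟩
  rw [← hs]
  exact (le_csSup fin'.bddAbove ⟨A, hA, rfl⟩).trans h

lemma maxSum_comp {ι κ : Type*} [Fintype ι] [Fintype κ] (x : ι → ℝ) (e : κ ≃ ι) (k : ℕ) :
    maxSum (x ∘ e) k = maxSum x k := by
  apply le_antisymm
  · apply maxSum_le _ _ _ (Fintype.card_congr e)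
    intro A hA
    exact ⟨A.map e.toEmbedding, by simpa using hA, by simp⟩
  · apply maxSum_le _ _ _ (Fintype.card_congr e.symm)
    intro A hA
    exact ⟨A.map e.symm.toEmbedding, by simpa using hA, by simp⟩

lemma majorizes_comp_right {ι κ τ : Type*} [Fintype ι] [Fintype κ] [Fintype τ]
    (x : ι → ℝ) (y : κ → ℝ) (e : τ ≃ κ) :
    Majorizes x (y ∘ e) ↔ Majorizes x y := by
  simp only [Majorizes, maxSum_comp]
  rw [show ∑ j, (y ∘ e) j = ∑ j, y j from Equiv.sum_comp e y]

lemma majorizes_comp_left {ι κ τ : Type*} [Fintype ι] [Fintype κ] [Fintype τ]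
    (x : ι → ℝ) (y : κ → ℝ) (e : τ ≃ ι) :
    Majorizes (x ∘ e) y ↔ Majorizes x y := by
  simp only [Majorizes, maxSum_comp]
  rw [show ∑ j, (x ∘ e) j = ∑ j, x j from Equiv.sum_comp e x]

/-- the combinatorial core for few nonzero eigenvalues -/
lemma comb {d m : ℕ} (hm : m ≤ 3) (hd : 24 ≤ d) {l : ℝ} (hl : 0 < l) :
    ∃ S : Finset (Fin d × Fin d), S.card = m ∧ ∀ p : Fin d × Fin d → ℝ, (∀ c, 0 ≤ p c) →
      (∀ c, p c ≤ l) → ∑ c, p c = m * l → ∀ X : Finset (Fin d ⊕ Fin d),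
      ∃ Y : Finset (Fin d ⊕ Fin d), Y.card = X.card ∧
        ∑ x ∈ X, rc p x ≤ ∑ x ∈ Y, rc (ind l S) x := by
  let z : Fin d := ⟨0, by omega⟩
  let F : ℕ → Finset (Fin d) := fun n => univ.filter (fun j => (j : ℕ) < n)
  have hF : ∀ n, n ≤ d → (F n).card = n := by
    intro n hn
    simp only [F]
    rw [Fin.card_filter_val_lt]; omega
  refine ⟨{z} ×ˢ F m, by rw [Finset.card_product, hF m (by omega)]; simp, ?_⟩
  intro p hp hpl hs X
  obtain ⟨A, B, rfl⟩ := exists_disjSum X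
  set k := (B.disjSum A).card with hk
  have hk' : k = B.card + A.card := by rw [hk, Finset.card_disjSum]
  rcases Nat.eq_zero_or_pos k with h0 | h0
  · refine ⟨∅, by rw [h0]; rfl, ?_⟩
    rw [hk, Finset.card_eq_zero] at h0
    rw [h0]; simp
  set n := min (k - 1) m with hn
  let Y0 : Finset (Fin d ⊕ Fin d) := (F n).disjSum {z}
  have hY0 : Y0.card ≤ k := by
    simp only [Y0, Finset.card_disjSum, Finset.card_singleton]
    rw [hF n (by omega)]; omega
  have hkd : k ≤ (univ : Finset (Fin d ⊕ Fin d)).card := Finset.card_le_univ _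
  obtain ⟨Y, hY, -, hYc⟩ := Finset.exists_subsuperset_card_eq (Finset.subset_univ Y0) hY0 hkd
  refine ⟨Y, hYc, ?_⟩
  have hi0 : ∀ c, 0 ≤ ind l (({z} : Finset (Fin d)) ×ˢ F m) c := by
    intro c; unfold ind; split_ifs <;> linarith
  have h1 : ∑ x ∈ Y0, rc (ind l ({z} ×ˢ F m)) x ≤ ∑ x ∈ Y, rc (ind l ({z} ×ˢ F m)) x :=
    Finset.sum_le_sum_of_subset_of_nonneg hY (fun x _ _ => rc_nonneg hi0 x)
  refine le_trans ?_ h1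
  have h2 : ∑ x ∈ Y0, rc (ind l ({z} ×ˢ F m)) x = (m + n : ℕ) * l := by
    simp only [Y0]
    rw [rc_sum, sum_ind]
    have e1 : ∑ c ∈ ({z} : Finset (Fin d)) ×ˢ F n, ind l (({z} : Finset (Fin d)) ×ˢ F m) c
        = n * l := by
      rw [Finset.sum_congr rfl (g := fun _ => l)]
      · simp [hF n (by omega)]
      · intro c hc
        simp only [ind]
        rw [if_pos]
        simp only [Finset.mem_product, F, Finset.mem_filter, Finset.mem_univ, true_and] at hc ⊢
        exact ⟨hc.1, by omega⟩
    have e2 : ∑ c ∈ ({z} : Finset (Fin d))ᶜ ×ˢ (F n)ᶜ, ind l (({z} : Finset (Fin d)) ×ˢ F m) c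
        = 0 := by
      apply Finset.sum_eq_zero
      intro c hc
      simp only [ind]
      rw [if_neg]
      simp only [Finset.mem_product, Finset.mem_compl] at hc ⊢
      exact fun h => hc.1 h.1
    rw [e1, e2, Finset.card_product, hF m (by omega)]
    push_cast
    simp
    ring
  rw [h2]
  by_cases hc : m ≤ k - 1
  · have := rc_bound2 hp (B.disjSum A)
    rw [hs] at this
    rw [hn, min_eq_right hc]; push_cast; linarith
  · have := rc_bound1 hp hpl A B
    rw [hs] at this
    have hab : A.card * B.card ≤ n := by
      have hA : A.card ≤ 2 ∨ A.card = 3 := by omega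
      have hB : B.card ≤ 3 := by omega
      have hA : A.card ≤ 3 := by omega
      generalize A.card = a at *
      generalize B.card = b at *
      interval_cases a <;> interval_cases b <;> omega
    have : ((A.card * B.card : ℕ) : ℝ) * l ≤ n * l :=
      mul_le_mul_of_nonneg_right (by exact_mod_cast hab) hl.le
    push_cast at *
    linarith

lemma comb_dual {d r : ℕ} (hr : d * d - 3 ≤ r) (hr2 : r ≤ d * d) (hd : 24 ≤ d) {l : ℝ}
    (hl : 0 < l) :
    ∃ S : Finset (Fin d × Fin d), S.card = r ∧ ∀ p : Fin d × Fin d → ℝ, (∀ c, 0 ≤ p c) →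
      (∀ c, p c ≤ l) → ∑ c, p c = r * l → ∀ X : Finset (Fin d ⊕ Fin d),
      ∃ Y : Finset (Fin d ⊕ Fin d), Y.card = X.card ∧
        ∑ x ∈ X, rc p x ≤ ∑ x ∈ Y, rc (ind l S) x := by
  obtain ⟨S, hS, h⟩ := comb (d := d) (m := d * d - r) (by omega) hd hl
  have hSc : Sᶜ.card = r := by
    rw [Finset.card_compl, hS]; simp; omega
  refine ⟨Sᶜ, hSc, ?_⟩
  intro p hp hpl hs X
  have hsub : ∀ q : Fin d × Fin d → ℝ, ∀ x, rc (fun c => l - q c) x = d * l - rc q x := by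
    intro q x
    rcases x with x | x <;> simp [rc]
  obtain ⟨Y, hY, hXY⟩ := h (fun c => l - p c) (fun c => by linarith [hpl c])
    (fun c => by linarith [hp c]) (by
      rw [Finset.sum_sub_distrib, hs]
      simp
      rw [Nat.cast_sub hr2]; push_cast; ring) Xᶜ
  refine ⟨Yᶜ, ?_, ?_⟩
  · rw [Finset.card_compl] at hY ⊢
    have := Finset.card_le_univ X
    omega
  have hc : (fun c => l - ind l Sᶜ c) = ind l S := by
    funext c; simp only [ind, Finset.mem_compl]; split_ifs <;> simp
  rw [← hc] at hXY
  simp only [hsub] at hXY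
  rw [Finset.sum_sub_distrib, Finset.sum_sub_distrib, Finset.sum_const, Finset.sum_const, hY] at hXY
  have t1 := Finset.sum_compl_add_sum X (rc p)
  have t2 := Finset.sum_compl_add_sum Y (rc (ind l Sᶜ))
  rw [rc_total, hs] at t1
  rw [rc_total, sum_ind, hSc] at t2
  linarith

/-- equality analysis -/
lemma rigid {d r : ℕ} {l : ℝ} (hl : 0 < l) {S : Finset (Fin d × Fin d)} (hS : S.card = r)
    {A B : Finset (Fin d)} {n : ℕ} (hn : A.card * B.card ≤ n)
    (h : (r + n : ℕ) * l ≤ ∑ x ∈ B.disjSum A, rc (ind l S) x) :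
    A ×ˢ B ⊆ S ∧ (∀ c ∈ S, c.1 ∈ A ∨ c.2 ∈ B) ∧ A.card * B.card = n := by
  have hi0 : ∀ c, 0 ≤ ind l S c := by intro c; unfold ind; split_ifs <;> linarith
  have hi1 : ∀ c, ind l S c ≤ l := by intro c; unfold ind; split_ifs <;> linarith
  have hb := rc_bound1 hi0 hi1 A B
  rw [sum_ind, hS] at hb
  have hn' : ((r + n : ℕ) : ℝ) * l ≤ ((r + A.card * B.card : ℕ) : ℝ) * l := by
    push_cast at *; linarith
  have hn2 : n ≤ A.card * B.card := by
    have := le_of_mul_le_mul_right hn' hl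
    have : r + n ≤ r + A.card * B.card := by exact_mod_cast this
    omega
  have hn3 : A.card * B.card = n := le_antisymm hn hn2
  refine ⟨?_, ?_, hn3⟩
  all_goals
    rw [rc_sum, sum_ind, hS] at h
    have e : ∑ c ∈ A ×ˢ B, (l - ind l S c) = n * l - ∑ c ∈ A ×ˢ B, ind l S c := by
      rw [Finset.sum_sub_distrib, Finset.sum_const, Finset.card_product, hn3, nsmul_eq_mul]
    have p1 : 0 ≤ ∑ c ∈ A ×ˢ B, (l - ind l S c) :=
      Finset.sum_nonneg (fun c _ => by linarith [hi1 c])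
    have p2 : 0 ≤ ∑ c ∈ Aᶜ ×ˢ Bᶜ, ind l S c := Finset.sum_nonneg (fun c _ => hi0 c)
    push_cast at h
  · have z : ∑ c ∈ A ×ˢ B, (l - ind l S c) = 0 := by linarith
    rw [Finset.sum_eq_zero_iff_of_nonneg (fun c _ => by linarith [hi1 c])] at z
    intro c hc
    have := z c hc
    by_contra hcS
    simp [ind, hcS] at this
    linarith
  · have z : ∑ c ∈ Aᶜ ×ˢ Bᶜ, ind l S c = 0 := by linarith
    rw [Finset.sum_eq_zero_iff_of_nonneg (fun c _ => hi0 c)] at z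
    intro c hc
    by_contra hcS
    push Not at hcS
    have := z c (by simp [hcS.1, hcS.2])
    simp [ind, hc] at this
    linarith

lemma exists_T {d r a b : ℕ} (ha : a ≤ d) (hb : b ≤ d) (h1 : a * b ≤ r)
    (h2 : r + (d - a) * (d - b) ≤ d * d) (l : ℝ) :
    ∃ T : Finset (Fin d × Fin d), T.card = r ∧ ∃ X : Finset (Fin d ⊕ Fin d), X.card = a + b ∧
      ∑ x ∈ X, rc (ind l T) x = (r + a * b : ℕ) * l := by
  obtain ⟨A, -, hA⟩ := Finset.exists_subset_card_eq (s := (univ : Finset (Fin d))) (n := a)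
    (by simpa using ha)
  obtain ⟨B, -, hB⟩ := Finset.exists_subset_card_eq (s := (univ : Finset (Fin d))) (n := b)
    (by simpa using hb)
  have hsub : A ×ˢ B ⊆ (Aᶜ ×ˢ Bᶜ)ᶜ := by
    intro c; simp only [Finset.mem_product, Finset.mem_compl]; tauto
  obtain ⟨T, hT1, hT2, hT⟩ := Finset.exists_subsuperset_card_eq (n := r) hsub
    (by rw [Finset.card_product, hA, hB]; exact h1)
    (by rw [Finset.card_compl, Finset.card_product, Finset.card_compl, Finset.card_compl, hA, hB]
        simp; omega)
  refine ⟨T, hT, B.disjSum A, by rw [Finset.card_disjSum, hA, hB, add_comm], ?_⟩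
  rw [rc_sum, sum_ind, hT]
  have e1 : ∑ c ∈ A ×ˢ B, ind l T c = (a * b : ℕ) * l := by
    rw [Finset.sum_congr rfl (g := fun _ => l)]
    · rw [Finset.sum_const, Finset.card_product, hA, hB, nsmul_eq_mul]
    · intro c hc; simp [ind, hT1 hc]
  have e2 : ∑ c ∈ Aᶜ ×ˢ Bᶜ, ind l T c = 0 := by
    apply Finset.sum_eq_zero
    intro c hc
    have : c ∉ T := fun h => by
      have := hT2 h
      rw [Finset.mem_compl] at this
      exact this hc
    simp [ind, this]
  rw [e1, e2]; push_cast; ring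

lemma numeric {d r : ℕ} (hd : 24 ≤ d) (h1 : 4 ≤ r) (h2 : r + 4 ≤ d * d) :
    ∃ a b a' b' : ℕ, a ≤ a' ∧ b ≤ b' ∧ a' ≤ d ∧ b' ≤ d ∧
      ((b = a ∧ a' = a + 1 ∧ b' = a + 2) ∨ (b = a + 1 ∧ a' = a + 2 ∧ b' = a + 2)) ∧
      a' * b' ≤ r ∧ r + (d - a) * (d - b) ≤ d * d := by
  let Q : ℕ → Prop := fun K => (K / 2) * ((K + 1) / 2) ≤ r
  have : DecidablePred Q := fun _ => Nat.decLe _ _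
  set K := Nat.findGreatest Q (2 * d) with hK
  have hQ4 : Q 4 := by simp [Q]; omega
  have hK4 : 4 ≤ K := Nat.le_findGreatest (by omega) hQ4
  have hQ : Q K := Nat.findGreatest_spec (P := Q) (m := 4) (n := 2 * d) (by omega) hQ4
  have hle : K ≤ 2 * d := Nat.findGreatest_le _
  have hlt : K < 2 * d := by
    rcases Nat.lt_or_ge K (2 * d) with h | h
    · exact h
    · have e : K = 2 * d := le_antisymm hle h
      rw [e] at hQ
      simp only [Q] at hQ
      rw [show 2 * d / 2 = d by omega, show (2 * d + 1) / 2 = d by omega] at hQ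
      omega
  have hnQ : ¬ Q (K + 1) := Nat.findGreatest_is_greatest (n := 2 * d) (by omega) (by omega)
  simp only [Q, not_le] at hQ hnQ
  obtain ⟨t, ht | ht⟩ := Nat.even_or_odd' K
  · -- K even
    obtain ⟨a, rfl⟩ : ∃ a, t = a + 2 := ⟨t - 2, by omega⟩
    rw [ht, show 2 * (a + 2) / 2 = a + 2 by omega, show (2 * (a + 2) + 1) / 2 = a + 2 by omega]
      at hQ
    rw [ht, show (2 * (a + 2) + 1) / 2 = a + 2 by omega,
      show (2 * (a + 2) + 1 + 1) / 2 = a + 3 by omega] at hnQ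
    refine ⟨a, a + 1, a + 2, a + 2, by omega, by omega, by omega, by omega, Or.inr (by omega),
      hQ, ?_⟩
    obtain ⟨e, rfl⟩ : ∃ e, d = a + 3 + e := ⟨d - (a + 3), by omega⟩
    rw [show a + 3 + e - a = e + 3 by omega, show a + 3 + e - (a + 1) = e + 2 by omega]
    rcases Nat.eq_zero_or_pos a with rfl | ha
    · nlinarith
    · rcases Nat.eq_zero_or_pos e with rfl | he
      · nlinarith
      · nlinarith
  · obtain ⟨a, rfl⟩ : ∃ a, t = a + 1 := ⟨t - 1, by omega⟩
    rw [ht, show (2 * (a + 1) + 1) / 2 = a + 1 by omega,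
      show (2 * (a + 1) + 1 + 1) / 2 = a + 2 by omega] at hQ
    rw [ht, show (2 * (a + 1) + 1 + 1) / 2 = a + 2 by omega,
      show (2 * (a + 1) + 1 + 1 + 1) / 2 = a + 2 by omega] at hnQ
    refine ⟨a, a, a + 1, a + 2, by omega, by omega, by omega, by omega, Or.inl (by omega),
      hQ, ?_⟩
    obtain ⟨e, rfl⟩ : ∃ e, d = a + 2 + e := ⟨d - (a + 2), by omega⟩
    rw [show a + 2 + e - a = e + 2 by omega]
    rcases Nat.eq_zero_or_pos e with rfl | he
    · nlinarith
    · have : 1 ≤ a := by omega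
      nlinarith [mul_le_mul this he (by omega) (by omega)]

lemma nat_le {x y a b : ℕ} (hab : b = a ∨ b = a + 1) (h : y + x = a + b) : x * y ≤ a * b := by
  rcases Nat.lt_or_ge a x with hx | hx
  · obtain ⟨e, rfl⟩ : ∃ e, x = a + 1 + e := ⟨x - (a + 1), by omega⟩
    rcases hab with rfl | rfl
    · obtain rfl : b = y + e + 1 := by omega
      nlinarith
    · obtain rfl : a = y + e := by omega
      nlinarith
  · obtain ⟨e, rfl⟩ : ∃ e, a = x + e := ⟨a - x, by omega⟩
    rcases hab with rfl | rfl
    · obtain rfl : y = x + 2 * e := by omega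
      nlinarith
    · obtain rfl : y = x + 2 * e + 1 := by omega
      nlinarith

lemma nat_eq {x y a b : ℕ} (hab : b = a ∨ b = a + 1) (h : y + x = a + b) (h2 : x * y = a * b) :
    (x = a ∧ y = b) ∨ (x = b ∧ y = a) := by
  have : ((x : ℤ) - a) * (x - b) = 0 := by
    zify at h h2
    have : (y : ℤ) = a + b - x := by linarith
    rw [this] at h2
    linarith
  rcases mul_eq_zero.mp this with h | h <;> omega

lemma no_S {d r : ℕ} (hd : 24 ≤ d) (h1 : 4 ≤ r) (h2 : r + 4 ≤ d * d) {l : ℝ} (hl : 0 < l)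
    {S : Finset (Fin d × Fin d)} (hS : S.card = r)
    (h : ∀ T : Finset (Fin d × Fin d), T.card = r →
      Majorizes (rc (ind l T)) (rc (ind l S))) : False := by
  obtain ⟨a, b, a', b', haa, hbb, had, hbd, hcase, hr1, hr2⟩ := numeric hd h1 h2
  have step : ∀ a b : ℕ, (b = a ∨ b = a + 1) → a ≤ d → b ≤ d → a * b ≤ r →
      r + (d - a) * (d - b) ≤ d * d → ∃ A B : Finset (Fin d),
        A ×ˢ B ⊆ S ∧ (∀ c ∈ S, c.1 ∈ A ∨ c.2 ∈ B) ∧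
        ((A.card = a ∧ B.card = b) ∨ (A.card = b ∧ B.card = a)) := by
    intro a b hab ha hb hr1 hr2
    obtain ⟨T, hT, X, hX, hXs⟩ := exists_T ha hb hr1 hr2 l
    obtain ⟨Y, hY, hXY⟩ := exists_of_maxSum_le _ _ _ ((h T hT).1 (a + b)) (by simp; omega) X hX
    obtain ⟨A, B, rfl⟩ := exists_disjSum Y
    rw [Finset.card_disjSum] at hY
    rw [hXs] at hXY
    have hle : A.card * B.card ≤ a * b := nat_le hab hY
    obtain ⟨p1, p2, p3⟩ := rigid hl hS hle hXY
    exact ⟨A, B, p1, p2, nat_eq hab hY p3⟩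
  obtain ⟨A, B, -, hcross, hAB⟩ := step a b (by omega) (by omega) (by omega)
    ((Nat.mul_le_mul haa hbb).trans hr1) hr2
  obtain ⟨A', B', hblock, -, hAB'⟩ := step a' b' (by omega) had hbd hr1
    (le_trans (Nat.add_le_add_left (Nat.mul_le_mul (by omega) (by omega)) _) hr2)
  have hA : ∃ i ∈ A', i ∉ A := by
    by_contra hcon; push Not at hcon
    have := Finset.card_le_card (show A' ⊆ A from hcon)
    omega
  have hB : ∃ i ∈ B', i ∉ B := by
    by_contra hcon; push Not at hcon
    have := Finset.card_le_card (show B' ⊆ B from hcon)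
    omega
  obtain ⟨i, hi, hi'⟩ := hA
  obtain ⟨j, hj, hj'⟩ := hB
  rcases hcross (i, j) (hblock (Finset.mem_product.mpr ⟨hi, hj⟩)) with h | h
  · exact hi' h
  · exact hj' h

end FlatSpec

namespace FlatSpec

lemma pt2_conj {d : ℕ} (M : Matrix (Fin d × Fin d) (Fin d × Fin d) ℂ) (V W : Matrix (Fin d) (Fin d) ℂ)
    (hW : W * Wᴴ = 1) :
    ptrace2 ((V ⊗ₖ W)ᴴ * M * (V ⊗ₖ W)) = Vᴴ * ptrace2 M * V := by
  have hd : ∀ t u, ∑ s, W t s * star (W u s) = if t = u then 1 else 0 := by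
    intro t u
    have := congrFun (congrFun hW t) u
    rw [Matrix.mul_apply, Matrix.one_apply] at this
    simpa using this
  ext i j
  have h1 : ptrace2 ((V ⊗ₖ W)ᴴ * M * (V ⊗ₖ W)) i j =
      ∑ q : Fin d × Fin d, ∑ p : Fin d × Fin d,
        (star (V p.1 i) * M p q * V q.1 j) * ∑ s, W q.2 s * star (W p.2 s) := by
    simp only [ptrace2, Matrix.of_apply, Matrix.mul_apply, Matrix.conjTranspose_apply,
      Matrix.kroneckerMap_apply, Finset.sum_mul, Finset.mul_sum, star_mul']
    rw [Finset.sum_comm]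
    apply Finset.sum_congr rfl; intro q _
    rw [Finset.sum_comm]
    apply Finset.sum_congr rfl; intro p _
    apply Finset.sum_congr rfl; intro s _
    ring
  rw [h1]
  simp only [hd, Matrix.mul_apply, ptrace2, Matrix.of_apply, Matrix.conjTranspose_apply,
    Finset.sum_mul, Finset.mul_sum, Fintype.sum_prod_type]
  apply Finset.sum_congr rfl; intro b _
  rw [Finset.sum_comm]
  apply Finset.sum_congr rfl; intro a _
  apply Finset.sum_congr rfl; intro s _
  simp

lemma pt1_conj {d : ℕ} (M : Matrix (Fin d × Fin d) (Fin d × Fin d) ℂ) (V W : Matrix (Fin d) (Fin d) ℂ)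
    (hV : V * Vᴴ = 1) :
    ptrace1 ((V ⊗ₖ W)ᴴ * M * (V ⊗ₖ W)) = Wᴴ * ptrace1 M * W := by
  have hd : ∀ t u, ∑ s, V t s * star (V u s) = if t = u then 1 else 0 := by
    intro t u
    have := congrFun (congrFun hV t) u
    rw [Matrix.mul_apply, Matrix.one_apply] at this
    simpa using this
  ext i j
  have h1 : ptrace1 ((V ⊗ₖ W)ᴴ * M * (V ⊗ₖ W)) i j =
      ∑ q : Fin d × Fin d, ∑ p : Fin d × Fin d,
        (star (W p.2 i) * M p q * W q.2 j) * ∑ s, V q.1 s * star (V p.1 s) := by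
    simp only [ptrace1, Matrix.of_apply, Matrix.mul_apply, Matrix.conjTranspose_apply,
      Matrix.kroneckerMap_apply, Finset.sum_mul, Finset.mul_sum, star_mul']
    rw [Finset.sum_comm]
    apply Finset.sum_congr rfl; intro q _
    rw [Finset.sum_comm]
    apply Finset.sum_congr rfl; intro p _
    apply Finset.sum_congr rfl; intro s _
    ring
  rw [h1]
  simp only [hd, Matrix.mul_apply, ptrace1, Matrix.of_apply, Matrix.conjTranspose_apply,
    Finset.sum_mul, Finset.mul_sum, Fintype.sum_prod_type_right]
  apply Finset.sum_congr rfl; intro b _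
  rw [Finset.sum_comm]
  apply Finset.sum_congr rfl; intro a _
  apply Finset.sum_congr rfl; intro s _
  simp

lemma conj_inv {n : Type*} [Fintype n] [DecidableEq n] {M V D : Matrix n n ℂ} (hV : Vᴴ * V = 1)
    (hs : M = V * D * Vᴴ) : Vᴴ * M * V = D := by
  rw [hs]
  calc _ = (Vᴴ * V) * D * (Vᴴ * V) := by simp only [Matrix.mul_assoc]
    _ = _ := by rw [hV, Matrix.one_mul, Matrix.mul_one]

lemma eig_conj {n : Type*} [Fintype n] [DecidableEq n] {M : Matrix n n ℂ} (h : M.IsHermitian) :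
    (h.eigenvectorUnitary : Matrix n n ℂ)ᴴ * M * (h.eigenvectorUnitary : Matrix n n ℂ)
      = Matrix.diagonal (fun i => (h.eigenvalues i : ℂ)) := by
  have hV : (h.eigenvectorUnitary : Matrix n n ℂ)ᴴ * (h.eigenvectorUnitary : Matrix n n ℂ) = 1 :=
    Matrix.mem_unitaryGroup_iff'.mp h.eigenvectorUnitary.2
  have hs := h.spectral_theorem
  rw [Unitary.conjStarAlgAut_apply, Matrix.star_eq_conjTranspose] at hs
  exact conj_inv hV hs

lemma eig_diag {n : Type*} [Fintype n] [DecidableEq n] (v : n → ℝ) {M : Matrix n n ℂ}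
    (hM : M = Matrix.diagonal (fun i => (v i : ℂ))) (h : M.IsHermitian) :
    ∃ σ : n ≃ n, h.eigenvalues = v ∘ σ := by
  classical
  have h1 := h.roots_charpoly_eq_eigenvalues
  have h2 : M.charpoly.roots = Multiset.map (fun i => (v i : ℂ)) univ.val := by
    rw [hM, Matrix.charpoly_diagonal]
    have := Polynomial.roots_multiset_prod_X_sub_C (Multiset.map (fun i => (v i : ℂ)) univ.val)
    rw [Multiset.map_map] at this
    exact this
  rw [h2] at h1
  have h3 : Multiset.map v univ.val = Multiset.map h.eigenvalues univ.val := by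
    apply Multiset.map_injective (f := fun x : ℝ => (x : ℂ)) Complex.ofReal_injective
    simp only [Multiset.map_map]
    exact h1
  have h4 : ∀ c : ℝ, Nonempty ({i // h.eigenvalues i = c} ≃ {i // v i = c}) := by
    intro c
    rw [← Fintype.card_eq, Fintype.card_subtype, Fintype.card_subtype]
    have := congrArg (Multiset.count c) h3
    rw [Multiset.count_map, Multiset.count_map] at this
    simp only [eq_comm (a := c)] at this
    exact this.symm
  refine ⟨Equiv.ofFiberEquiv (fun c => (h4 c).some), ?_⟩
  funext i
  exact (Equiv.ofFiberEquiv_map (fun c => (h4 c).some) i).symm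

lemma diag_conj {n : Type*} [Fintype n] [DecidableEq n] (e : n → ℝ) (X : Matrix n n ℂ) (c : n) :
    (X * Matrix.diagonal (fun i => (e i : ℂ)) * Xᴴ) c c = ((∑ q, e q * Complex.normSq (X c q) : ℝ) : ℂ) := by
  rw [Matrix.mul_apply]
  push_cast
  apply Finset.sum_congr rfl; intro q _
  rw [Matrix.mul_diagonal, Matrix.conjTranspose_apply, Complex.normSq_eq_conj_mul_self]
  simp only [Complex.star_def]
  ring

lemma row_norm {n : Type*} [Fintype n] [DecidableEq n] (X : Matrix n n ℂ) (hX : X * Xᴴ = 1) (c : n) :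
    ∑ q, Complex.normSq (X c q) = 1 := by
  have := diag_conj (fun _ => 1) X c
  simp only [Complex.ofReal_one, one_mul] at this
  rw [show Matrix.diagonal (fun _ : n => (1 : ℂ)) = 1 from Matrix.diagonal_one, Matrix.mul_one, hX,
    Matrix.one_apply_eq] at this
  exact_mod_cast this.symm

lemma col_norm {n : Type*} [Fintype n] [DecidableEq n] (X : Matrix n n ℂ) (hX : Xᴴ * X = 1) (q : n) :
    ∑ c, Complex.normSq (X c q) = 1 := by
  have := row_norm Xᴴ (by rw [Matrix.conjTranspose_conjTranspose]; exact hX) q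
  simpa using this

lemma key {d : ℕ} {C : Matrix (Fin d × Fin d) (Fin d × Fin d) ℂ} (hC : C.IsHermitian) {l : ℝ}
    (he0 : ∀ c, 0 ≤ hC.eigenvalues c) (he1 : ∀ c, hC.eigenvalues c ≤ l)
    (U : Matrix (Fin d × Fin d) (Fin d × Fin d) ℂ)
    (hU : U ∈ Matrix.unitaryGroup (Fin d × Fin d) ℂ)
    (h1 : (ptrace1 (U * C * Uᴴ)).IsHermitian) (h2 : (ptrace2 (U * C * Uᴴ)).IsHermitian) :
    ∃ p : Fin d × Fin d → ℝ, (∀ c, 0 ≤ p c) ∧ (∀ c, p c ≤ l) ∧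
      ∑ c, p c = ∑ c, hC.eigenvalues c ∧
      Sum.elim h1.eigenvalues h2.eigenvalues = rc p := by
  set V1 : Matrix (Fin d) (Fin d) ℂ := h1.eigenvectorUnitary.1 with hV1
  set V2 : Matrix (Fin d) (Fin d) ℂ := h2.eigenvectorUnitary.1 with hV2
  set V : Matrix (Fin d × Fin d) (Fin d × Fin d) ℂ := hC.eigenvectorUnitary.1 with hV
  have u1 : V1 * V1ᴴ = 1 := Matrix.mem_unitaryGroup_iff.mp h1.eigenvectorUnitary.2
  have u2 : V2 * V2ᴴ = 1 := Matrix.mem_unitaryGroup_iff.mp h2.eigenvectorUnitary.2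
  have hK : V2 ⊗ₖ V1 ∈ Matrix.unitaryGroup (Fin d × Fin d) ℂ :=
    Matrix.kronecker_mem_unitary h2.eigenvectorUnitary.2 h1.eigenvectorUnitary.2
  set K := V2 ⊗ₖ V1 with hKdef
  have hX : star K * (U * V) ∈ Matrix.unitaryGroup (Fin d × Fin d) ℂ :=
    mul_mem (Unitary.star_mem hK) (mul_mem hU hC.eigenvectorUnitary.2)
  set X := star K * (U * V) with hXdef
  have x1 : X * Xᴴ = 1 := Matrix.mem_unitaryGroup_iff.mp hX
  have x2 : Xᴴ * X = 1 := Matrix.mem_unitaryGroup_iff'.mp hX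
  have hs : C = V * Matrix.diagonal (fun i => (hC.eigenvalues i : ℂ)) * Vᴴ := by
    have := hC.spectral_theorem
    rw [Unitary.conjStarAlgAut_apply, Matrix.star_eq_conjTranspose] at this
    exact this
  have hN : Kᴴ * (U * C * Uᴴ) * K =
      X * Matrix.diagonal (fun i => (hC.eigenvalues i : ℂ)) * Xᴴ := by
    rw [hXdef]
    conv_lhs => rw [hs]
    simp only [Matrix.conjTranspose_mul, Matrix.star_eq_conjTranspose,
      Matrix.conjTranspose_conjTranspose, Matrix.mul_assoc]
  have hdiag : ∀ c, (Kᴴ * (U * C * Uᴴ) * K) c c =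
      ((∑ q, hC.eigenvalues q * Complex.normSq (X c q) : ℝ) : ℂ) := by
    intro c; rw [hN, diag_conj]
  refine ⟨fun c => ∑ q, hC.eigenvalues q * Complex.normSq (X c q), ?_, ?_, ?_, ?_⟩
  · intro c
    exact Finset.sum_nonneg (fun q _ => mul_nonneg (he0 q) (Complex.normSq_nonneg _))
  · intro c
    calc _ ≤ ∑ q, l * Complex.normSq (X c q) :=
          Finset.sum_le_sum (fun q _ => mul_le_mul_of_nonneg_right (he1 q) (Complex.normSq_nonneg _))
      _ = l := by rw [← Finset.mul_sum, row_norm X x1, mul_one]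
  · rw [Finset.sum_comm]
    apply Finset.sum_congr rfl; intro q _
    rw [← Finset.mul_sum, col_norm X x2, mul_one]
  · have t1 := pt1_conj (U * C * Uᴴ) V2 V1 u2
    have t2 := pt2_conj (U * C * Uᴴ) V2 V1 u1
    have t1 := t1.trans (eig_conj h1)
    have t2 := t2.trans (eig_conj h2)
    funext x
    rcases x with x | x
    · have := congrFun (congrFun t1 x) x
      rw [Matrix.diagonal_apply_eq] at this
      simp only [Sum.elim_inl, rc]
      apply Complex.ofReal_injective
      rw [← this, Complex.ofReal_sum]
      exact Finset.sum_congr (s₁ := univ) rfl (fun i _ => hdiag (i, x))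
    · have := congrFun (congrFun t2 x) x
      rw [Matrix.diagonal_apply_eq] at this
      simp only [Sum.elim_inr, rc]
      apply Complex.ofReal_injective
      rw [← this, Complex.ofReal_sum]
      exact Finset.sum_congr (s₁ := univ) rfl (fun i _ => hdiag (x, i))

lemma pt1_diag {d : ℕ} (v : Fin d × Fin d → ℝ) :
    ptrace1 (Matrix.diagonal (fun c => (v c : ℂ))) =
      Matrix.diagonal (fun t => ((rc v (Sum.inl t) : ℝ) : ℂ)) := by
  ext s t
  simp only [ptrace1, Matrix.of_apply, Matrix.diagonal_apply, rc, Sum.elim_inl]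
  by_cases h : s = t <;> simp [h]

lemma pt2_diag {d : ℕ} (v : Fin d × Fin d → ℝ) :
    ptrace2 (Matrix.diagonal (fun c => (v c : ℂ))) =
      Matrix.diagonal (fun t => ((rc v (Sum.inr t) : ℝ) : ℂ)) := by
  ext s t
  simp only [ptrace2, Matrix.of_apply, Matrix.diagonal_apply, rc, Sum.elim_inr]
  by_cases h : s = t <;> simp [h]

lemma rc_diag {d : ℕ} (v : Fin d × Fin d → ℝ) {D : Matrix (Fin d × Fin d) (Fin d × Fin d) ℂ}
    (hD : D = Matrix.diagonal (fun c => (v c : ℂ)))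
    (h1 : (ptrace1 D).IsHermitian) (h2 : (ptrace2 D).IsHermitian) :
    ∃ σ : Fin d ⊕ Fin d ≃ Fin d ⊕ Fin d,
      Sum.elim h1.eigenvalues h2.eigenvalues = rc v ∘ σ := by
  obtain ⟨σ, hσ⟩ := eig_diag (fun t => rc v (Sum.inl t)) (by rw [hD, pt1_diag]) h1
  obtain ⟨τ, hτ⟩ := eig_diag (fun t => rc v (Sum.inr t)) (by rw [hD, pt2_diag]) h2
  refine ⟨Equiv.sumCongr σ τ, ?_⟩
  funext x
  rcases x with x | x
  · simp [hσ]
  · simp [hτ]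

lemma diag_herm {n : Type*} [Fintype n] [DecidableEq n] (v : n → ℝ) :
    (Matrix.diagonal (fun c => (v c : ℂ))).IsHermitian := by
  rw [Matrix.IsHermitian, Matrix.diagonal_conjTranspose]
  congr 1
  funext i; simp

lemma exists_U {d : ℕ} {C : Matrix (Fin d × Fin d) (Fin d × Fin d) ℂ} (hC : C.IsHermitian)
    (σ : Equiv.Perm (Fin d × Fin d)) :
    ∃ U ∈ Matrix.unitaryGroup (Fin d × Fin d) ℂ,
      U * C * Uᴴ = Matrix.diagonal (fun c => ((hC.eigenvalues (σ c) : ℝ) : ℂ)) := by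
  have hc := eig_conj hC
  have hV : hC.eigenvectorUnitary.1ᴴ * hC.eigenvectorUnitary.1 = 1 :=
    Matrix.mem_unitaryGroup_iff'.mp hC.eigenvectorUnitary.2
  set V : Matrix (Fin d × Fin d) (Fin d × Fin d) ℂ := hC.eigenvectorUnitary.1
  refine ⟨Vᴴ.submatrix σ id, ?_, ?_⟩
  · rw [Matrix.mem_unitaryGroup_iff, Matrix.star_eq_conjTranspose, Matrix.conjTranspose_submatrix,
      Matrix.conjTranspose_conjTranspose]
    ext i j
    have := congrFun (congrFun hV (σ i)) (σ j)
    rw [Matrix.mul_apply, Matrix.one_apply] at this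
    rw [Matrix.mul_apply, Matrix.one_apply]
    simpa using this
  · rw [Matrix.conjTranspose_submatrix, Matrix.conjTranspose_conjTranspose]
    ext i j
    have := congrFun (congrFun hc (σ i)) (σ j)
    rw [Matrix.diagonal_apply] at this
    rw [Matrix.diagonal_apply]
    simp only [σ.injective.eq_iff] at this
    rw [← this]
    simp [Matrix.mul_apply]

lemma exists_perm {n : Type*} [Fintype n] [DecidableEq n] {e : n → ℝ} {l : ℝ}
    (he : ∀ c, e c = 0 ∨ e c = l) (S : Finset n)
    (hS : S.card = Fintype.card {i // e i ≠ 0}) :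
    ∃ σ : Equiv.Perm n, ∀ c, e (σ c) = if c ∈ S then l else 0 := by
  classical
  have h : Nonempty ({c // c ∈ S} ≃ {i // e i ≠ 0}) := by
    rw [← Fintype.card_eq, ← hS]; simp
  obtain ⟨f⟩ := h
  refine ⟨f.extendSubtype, fun c => ?_⟩
  split_ifs with hc
  · exact (he _).resolve_left (f.extendSubtype_mem c hc)
  · exact not_not.mp (f.extendSubtype_not_mem c hc)

end FlatSpec

theorem flat_spectrum_characterization_large_d (d : ℕ) (hd : 24 ≤ d) (r : ℕ)
    (C : Matrix (Fin d × Fin d) (Fin d × Fin d) ℂ) (hC : C.PosSemidef)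
    (hrank : C.rank = r) (l : ℝ) (hl : 0 < l)
    -- the spectrum of `C` consists of `r` copies of `l` and zeros
    (hspec : ∃ g : Fin (d * d) ≃ Fin d × Fin d,
      ∀ k : Fin (d * d), hC.1.eigenvalues (g k) = if (k : ℕ) < r then l else 0) :
    (∃ D : Matrix (Fin d × Fin d) (Fin d × Fin d) ℂ, D.IsDiag ∧
      (∃ g : Equiv.Perm (Fin d × Fin d), ∀ p, D p p = (hC.1.eigenvalues (g p) : ℂ)) ∧
      ∀ U : Matrix (Fin d × Fin d) (Fin d × Fin d) ℂ,
        U ∈ Matrix.unitaryGroup (Fin d × Fin d) ℂ →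
        ∀ (hU1 : (ptrace1 (U * C * Uᴴ)).IsHermitian)
          (hU2 : (ptrace2 (U * C * Uᴴ)).IsHermitian)
          (hD1 : (ptrace1 D).IsHermitian) (hD2 : (ptrace2 D).IsHermitian),
          Majorizes (Sum.elim hU1.eigenvalues hU2.eigenvalues)
            (Sum.elim hD1.eigenvalues hD2.eigenvalues)) ↔
    (r ≤ 3 ∨ d * d - 3 ≤ r) := by
  classical
  set e := hC.1.eigenvalues with he_def
  have he : ∀ c, e c = 0 ∨ e c = l := by
    obtain ⟨g, hg⟩ := hspec
    intro c
    have := hg (g.symm c)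
    rw [Equiv.apply_symm_apply] at this
    rw [this]
    split_ifs <;> simp
  have hcard : Fintype.card {i // e i ≠ 0} = r := by
    rw [← hrank]; exact hC.1.rank_eq_card_non_zero_eigs.symm
  have he0 : ∀ c, 0 ≤ e c := fun c => by rcases he c with h | h <;> rw [h]; exact hl.le
  have he1 : ∀ c, e c ≤ l := fun c => by rcases he c with h | h <;> rw [h]; exact hl.le
  have hr : r ≤ d * d := by
    rw [← hcard]
    exact (Fintype.card_subtype_le _).trans (by simp)
  have hsum : ∑ c, e c = r * l := by
    obtain ⟨S, -, hS⟩ := Finset.exists_subset_card_eq (s := (univ : Finset (Fin d × Fin d)))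
      (n := r) (by simpa using hr)
    obtain ⟨σ, hσ⟩ := FlatSpec.exists_perm he S (by rw [hS, hcard])
    rw [← Equiv.sum_comp σ, ← hS, ← FlatSpec.sum_ind]
    exact Finset.sum_congr rfl (fun c _ => hσ c)
  constructor
  · rintro ⟨D, hD, ⟨g, hg⟩, hmaj⟩
    by_contra hcon
    push Not at hcon
    set S : Finset (Fin d × Fin d) := univ.filter (fun c => e (g c) ≠ 0) with hSdef
    have hS : S.card = r := by
      rw [← hcard, ← Fintype.card_subtype]
      exact Fintype.card_congr (g.subtypeEquiv (fun a => Iff.rfl))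
    have hDe : D = Matrix.diagonal (fun c => ((FlatSpec.ind l S c : ℝ) : ℂ)) := by
      rw [← hD.diagonal_diag]
      congr 1
      funext c
      rw [Matrix.diag_apply, hg]
      congr 1
      simp only [FlatSpec.ind, hSdef, Finset.mem_filter, Finset.mem_univ, true_and]
      split_ifs with h
      · exact (he _).resolve_left h
      · exact not_not.mp h
    apply FlatSpec.no_S hd (r := r) (by omega) (by omega) hl hS
    intro T hT
    obtain ⟨σ, hσ⟩ := FlatSpec.exists_perm he T (by rw [hT, hcard])
    obtain ⟨U, hU, hUC⟩ := FlatSpec.exists_U hC.1 σ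
    have hUC' : U * C * Uᴴ = Matrix.diagonal (fun c => ((FlatSpec.ind l T c : ℝ) : ℂ)) := by
      rw [hUC]
      congr 1
      funext c
      exact congrArg _ (hσ c)
    have hU1 : (ptrace1 (U * C * Uᴴ)).IsHermitian := by
      rw [hUC', FlatSpec.pt1_diag]; exact FlatSpec.diag_herm _
    have hU2 : (ptrace2 (U * C * Uᴴ)).IsHermitian := by
      rw [hUC', FlatSpec.pt2_diag]; exact FlatSpec.diag_herm _
    have hD1 : (ptrace1 D).IsHermitian := by
      rw [hDe, FlatSpec.pt1_diag]; exact FlatSpec.diag_herm _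
    have hD2 : (ptrace2 D).IsHermitian := by
      rw [hDe, FlatSpec.pt2_diag]; exact FlatSpec.diag_herm _
    have hm := hmaj U hU hU1 hU2 hD1 hD2
    obtain ⟨s1, hs1⟩ := FlatSpec.rc_diag _ hUC' hU1 hU2
    obtain ⟨s2, hs2⟩ := FlatSpec.rc_diag _ hDe hD1 hD2
    rwa [hs1, hs2, FlatSpec.majorizes_comp_right, FlatSpec.majorizes_comp_left] at hm
  · intro hb
    obtain ⟨S, hS, hcomb⟩ : ∃ S : Finset (Fin d × Fin d), S.card = r ∧
        ∀ p : Fin d × Fin d → ℝ, (∀ c, 0 ≤ p c) →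
        (∀ c, p c ≤ l) → ∑ c, p c = r * l → ∀ X : Finset (Fin d ⊕ Fin d),
        ∃ Y : Finset (Fin d ⊕ Fin d), Y.card = X.card ∧
          ∑ x ∈ X, FlatSpec.rc p x ≤ ∑ x ∈ Y, FlatSpec.rc (FlatSpec.ind l S) x := by
      rcases hb with hb | hb
      · exact FlatSpec.comb hb hd hl
      · exact FlatSpec.comb_dual hb hr hd hl
    obtain ⟨σ, hσ⟩ := FlatSpec.exists_perm he S (by rw [hS, hcard])
    refine ⟨Matrix.diagonal (fun c => ((FlatSpec.ind l S c : ℝ) : ℂ)), Matrix.isDiag_diagonal _,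
      ⟨σ, fun c => ?_⟩, ?_⟩
    · rw [Matrix.diagonal_apply_eq, hσ]; rfl
    · intro U hU hU1 hU2 hD1 hD2
      obtain ⟨p, hp0, hp1, hps, hpe⟩ := FlatSpec.key hC.1 he0 he1 U hU hU1 hU2
      obtain ⟨s2, hs2⟩ := FlatSpec.rc_diag _ rfl hD1 hD2
      rw [hpe, hs2, FlatSpec.majorizes_comp_right]
      have hps' : ∑ c, p c = r * l := hps.trans hsum
      refine ⟨fun k => FlatSpec.maxSum_le _ _ _ rfl ?_, ?_⟩
      · intro X hX
        obtain ⟨Y, hY, hXY⟩ := hcomb p hp0 hp1 hps' X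
        exact ⟨Y, hY.trans hX, hXY⟩
      · rw [FlatSpec.rc_total, FlatSpec.rc_total, hps', FlatSpec.sum_ind, hS]
end

section
/- Let 2 ≤ d1 ≤ d2 and let C be a positive semidefinite matrix on ℂ^{d1}⊗ℂ^{d2}. If (k−1)d2 < rank(C) ≤ k(d2−1) for some 2 ≤ k ≤ d1, then there exists a unitary U on ℂ^{d1}⊗ℂ^{d2} such that for every diagonal matrix D on ℂ^{d1}⊗ℂ^{d2} whose diagonal entries are a permutation of the eigenvalues of C (with multiplicity), the vector λ(tr_1[UCU*]) ⊕ λ(tr_2[UCU*]) is NOT majorized by λ(tr_1[D]) ⊕ λ(tr_2[D]). -/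
open Matrix Finset Kronecker
open scoped ComplexOrder

theorem eig_diag_perm {n : Type*} [Fintype n] [DecidableEq n] {A : Matrix n n ℂ}
    (hA : A.IsHermitian) (hd : A.IsDiag) :
    ∃ σ : n ≃ n, ∀ i, hA.eigenvalues i = (A (σ i) (σ i)).re := by
  have h1 := hA.roots_charpoly_eq_eigenvalues
  have hA' : A = diagonal (fun i => A i i) := by
    exact hd.diagonal_diag.symm
  have h2 : A.charpoly.roots = Multiset.map (fun i => A i i) univ.val := by
    conv_lhs => rw [hA', charpoly_diagonal]
    rw [Polynomial.roots_prod]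
    · simp
    · simp [Finset.prod_ne_zero_iff, Polynomial.X_sub_C_ne_zero]
  have h3 : Multiset.map hA.eigenvalues univ.val
      = Multiset.map (fun i => (A i i).re) univ.val := by
    have := congrArg (Multiset.map Complex.re) (h1.symm.trans h2)
    rw [Multiset.map_map, Multiset.map_map] at this
    simpa [Function.comp_def] using! this
  have hc : ∀ c : ℝ, Nonempty ({i // hA.eigenvalues i = c} ≃ {i // (A i i).re = c}) := by
    intro c
    rw [← Fintype.card_eq, Fintype.card_subtype, Fintype.card_subtype]
    have := congrArg (Multiset.count c) h3
    rw [Multiset.count_map, Multiset.count_map] at this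
    simp only [Finset.card_def, Finset.filter_val]
    simpa [eq_comm] using! this
  refine ⟨Equiv.ofFiberEquiv (f := hA.eigenvalues) (g := fun i => (A i i).re)
    (fun c => (hc c).some), fun i => ?_⟩
  exact (Equiv.ofFiberEquiv_map (f := hA.eigenvalues) (g := fun i => (A i i).re) _ i).symm

theorem maxSum_bdd {ι : Type*} [Fintype ι] (x : ι → ℝ) (k : ℕ) :
    BddAbove {s : ℝ | ∃ A : Finset ι, A.card = k ∧ s = ∑ i ∈ A, x i} := by
  apply Set.Finite.bddAbove
  refine (Set.finite_range (fun A : Finset ι => ∑ i ∈ A, x i)).subset ?_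
  rintro s ⟨A, -, rfl⟩
  exact ⟨A, rfl⟩

theorem le_maxSum {ι : Type*} [Fintype ι] (x : ι → ℝ) (A : Finset ι) :
    ∑ i ∈ A, x i ≤ maxSum x A.card :=
  le_csSup (maxSum_bdd x _) ⟨A, rfl, rfl⟩

theorem exists_of_lt_maxSum {ι : Type*} [Fintype ι] (x : ι → ℝ) (k : ℕ)
    (hk : k ≤ Fintype.card ι) (t : ℝ)
    (h : t < maxSum x k) : ∃ A : Finset ι, A.card = k ∧ t < ∑ i ∈ A, x i := by
  obtain ⟨A, -, hA⟩ := Finset.exists_subset_card_eq (s := (univ : Finset ι)) (n := k) (by simpa using hk)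
  have hne : {s : ℝ | ∃ A : Finset ι, A.card = k ∧ s = ∑ i ∈ A, x i}.Nonempty := ⟨_, A, hA, rfl⟩
  obtain ⟨s, ⟨B, hB, rfl⟩, hs⟩ := exists_lt_of_lt_csSup hne h
  exact ⟨B, hB, hs⟩

theorem maxSum_comp {ι κ : Type*} [Fintype ι] [Fintype κ] (e : ι ≃ κ) (x : κ → ℝ) (k : ℕ) :
    maxSum (fun i => x (e i)) k = maxSum x k := by
  unfold maxSum
  congr 1
  ext s
  constructor
  · rintro ⟨A, hA, rfl⟩
    exact ⟨A.map e.toEmbedding, by simpa using hA, by simp⟩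
  · rintro ⟨A, hA, rfl⟩
    exact ⟨A.map e.symm.toEmbedding, by simpa using hA, by simp⟩

theorem majorizes_comp {ι ι' κ κ' : Type*} [Fintype ι] [Fintype κ] [Fintype ι'] [Fintype κ']
    (e : ι ≃ ι') (f : κ ≃ κ') (x : ι' → ℝ) (y : κ' → ℝ)
    (h : Majorizes (fun i => x (e i)) (fun j => y (f j))) : Majorizes x y := by
  refine ⟨fun k => ?_, ?_⟩
  · have := h.1 k
    rwa [maxSum_comp, maxSum_comp] at this
  · have := h.2
    rwa [Equiv.sum_comp e x, Equiv.sum_comp f y] at this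

/-- Combinatorial heart. -/
theorem not_majorizes_core (d1 d2 k : ℕ) (hd12 : d1 ≤ d2) (hk2 : 2 ≤ k) (hkd : k ≤ d1)
    (μ : Fin d1 × Fin d2 → ℝ) (hμ : ∀ p, 0 ≤ μ p) (c T : ℝ)
    (hμc : ∀ p, μ p ≠ 0 → c ≤ μ p)
    (hr : (k - 1) * d2 < (univ.filter fun p => μ p ≠ 0).card)
    (hT : ∀ B : Finset (Fin d1 × Fin d2), B.card ≤ d2 - 1 → ∑ p ∈ B, μ p ≤ T)
    (x : Fin d2 ⊕ Fin d1 → ℝ) (i0 : Fin d2 ⊕ Fin d1) (hx1 : T < x i0)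
    (A : Finset (Fin d2 ⊕ Fin d1)) (hA : A.card = k + d2 - 1)
    (hx2 : 2 * ∑ p, μ p - c < ∑ i ∈ A, x i) :
    ¬ Majorizes x (Sum.elim (fun s => ∑ i, μ (i, s)) (fun i => ∑ s, μ (i, s))) := by
  intro h
  set y : Fin d2 ⊕ Fin d1 → ℝ := Sum.elim (fun s => ∑ i, μ (i, s)) (fun i => ∑ s, μ (i, s)) with hy
  have hysum : ∑ j, y j = 2 * ∑ p, μ p := by
    rw [Fintype.sum_sum_type]
    simp only [hy, Sum.elim_inl, Sum.elim_inr]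
    rw [Fintype.sum_prod_type, Finset.sum_comm]
    ring
  have hy0 : ∀ j, 0 ≤ y j := by
    rintro (s | i) <;> exact Finset.sum_nonneg fun _ _ => hμ _
  -- nonzero rows and columns
  set S := univ.filter fun p => μ p ≠ 0 with hS
  set a := S.image Prod.fst with ha
  set b := S.image Prod.snd with hb
  have hab : S.card ≤ a.card * b.card := by
    rw [← Finset.card_product]
    refine Finset.card_le_card fun p hp => ?_
    exact Finset.mem_product.2 ⟨Finset.mem_image_of_mem _ hp, Finset.mem_image_of_mem _ hp⟩
  have ha1 : a.card ≤ d1 := by simpa using Finset.card_le_univ a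
  have hb1 : b.card ≤ d2 := by simpa using Finset.card_le_univ b
  have hyc : ∀ j ∈ b.disjSum a, c ≤ y j := by
    rintro (s | i) hj
    · rw [Finset.inl_mem_disjSum] at hj
      obtain ⟨⟨i, s'⟩, hp, rfl⟩ := Finset.mem_image.1 hj
      have hp := (Finset.mem_filter.1 hp).2
      exact (hμc _ hp).trans
        (Finset.single_le_sum (f := fun i => μ (i, s')) (fun _ _ => hμ _) (mem_univ i))
    · rw [Finset.inr_mem_disjSum] at hj
      obtain ⟨⟨i', s⟩, hp, rfl⟩ := Finset.mem_image.1 hj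
      have hp := (Finset.mem_filter.1 hp).2
      exact (hμc _ hp).trans
        (Finset.single_le_sum (f := fun s => μ (i', s)) (fun _ _ => hμ _) (mem_univ s))
  -- top one
  have h1 : T < maxSum y 1 := by
    have := le_maxSum x {i0}
    rw [Finset.card_singleton, Finset.sum_singleton] at this
    linarith [h.1 1]
  have hcard : Fintype.card (Fin d2 ⊕ Fin d1) = d2 + d1 := by simp
  obtain ⟨B, hB, hBT⟩ := exists_of_lt_maxSum y 1 (by omega) T h1
  obtain ⟨j, rfl⟩ := Finset.card_eq_one.1 hB
  rw [Finset.sum_singleton] at hBT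
  have hfull : a.card = d2 ∨ b.card = d2 := by
    rcases j with s | i
    · left
      have hy' : y (Sum.inl s) = ∑ p ∈ (univ.filter fun i => μ (i, s) ≠ 0).map
          ⟨fun i => (i, s), fun _ _ h => (Prod.mk.inj h).1⟩, μ p := by
        rw [Finset.sum_map]
        exact (Finset.sum_filter_ne_zero (s := univ) (f := fun i => μ (i, s))).symm
      have hlt : d2 - 1 < (univ.filter fun i => μ (i, s) ≠ 0).card := by
        by_contra hcon
        have := hT ((univ.filter fun i => μ (i, s) ≠ 0).map
          ⟨fun i => (i, s), fun _ _ h => (Prod.mk.inj h).1⟩) (by rw [Finset.card_map]; omega)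
        linarith
      have hle : (univ.filter fun i => μ (i, s) ≠ 0).card ≤ a.card := by
        refine Finset.card_le_card fun i hi => ?_
        exact Finset.mem_image.2 ⟨(i, s), by simpa [hS] using hi, rfl⟩
      omega
    · right
      have hy' : y (Sum.inr i) = ∑ p ∈ (univ.filter fun s => μ (i, s) ≠ 0).map
          ⟨fun s => (i, s), fun _ _ h => (Prod.mk.inj h).2⟩, μ p := by
        rw [Finset.sum_map]
        exact (Finset.sum_filter_ne_zero (s := univ) (f := fun s => μ (i, s))).symm
      have hlt : d2 - 1 < (univ.filter fun s => μ (i, s) ≠ 0).card := by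
        by_contra hcon
        have := hT ((univ.filter fun s => μ (i, s) ≠ 0).map
          ⟨fun s => (i, s), fun _ _ h => (Prod.mk.inj h).2⟩) (by rw [Finset.card_map]; omega)
        linarith
      have hle : (univ.filter fun s => μ (i, s) ≠ 0).card ≤ b.card := by
        refine Finset.card_le_card fun s hi => ?_
        exact Finset.mem_image.2 ⟨(i, s), by simpa [hS] using hi, rfl⟩
      omega
  have hbig : k + d2 ≤ a.card + b.card := by
    have h2 : (k - 1) * d2 < a.card * b.card := lt_of_lt_of_le hr hab
    rcases hfull with h3 | h3
    · rw [h3, mul_comm d2] at h2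
      have := lt_of_mul_lt_mul_right h2 (Nat.zero_le _)
      omega
    · rw [h3] at h2
      have := lt_of_mul_lt_mul_right h2 (Nat.zero_le _)
      omega
  have h2 : 2 * ∑ p, μ p - c < maxSum y (k + d2 - 1) := by
    have := le_maxSum x A
    rw [hA] at this
    linarith [h.1 (k + d2 - 1)]
  obtain ⟨B', hB', hBT'⟩ := exists_of_lt_maxSum y _ (by omega) _ h2
  obtain ⟨j', hj', hjn⟩ : ∃ j' ∈ b.disjSum a, j' ∉ B' := by
    by_contra hcon
    push Not at hcon
    have := Finset.card_le_card (s := b.disjSum a) (t := B') hcon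
    rw [Finset.card_disjSum] at this
    omega
  have h5 : ∑ j ∈ insert j' B', y j ≤ ∑ j, y j :=
    Finset.sum_le_sum_of_subset_of_nonneg (Finset.subset_univ _) fun _ _ _ => hy0 _
  rw [Finset.sum_insert hjn] at h5
  have h6 := hyc j' hj'
  linarith [h6, h5]

/-- Sum of an antitone nonnegative family over a small set is at most the sum over an initial
segment. -/
theorem sum_le_initial {n m : ℕ} (l : Fin n → ℝ) (hl : Antitone l) (h0 : ∀ i, 0 ≤ l i)
    (hm : m < n) (B : Finset (Fin n)) (hB : B.card ≤ m) :
    ∑ i ∈ B, l i ≤ ∑ i ∈ univ.filter (fun i : Fin n => i.1 < m), l i := by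
  set I := univ.filter (fun i : Fin n => i.1 < m) with hI
  have hIc : I.card = m := by
    have : I = Finset.Iio (⟨m, hm⟩ : Fin n) := by
      ext i; simp [hI, Fin.lt_def]
    rw [this]; simp
  have e1 := Finset.sum_inter_add_sum_sdiff B I l
  have e2 := Finset.sum_inter_add_sum_sdiff I B l
  rw [Finset.inter_comm] at e2
  have c1 := Finset.card_inter_add_card_sdiff B I
  have c2 := Finset.card_inter_add_card_sdiff I B
  rw [Finset.inter_comm] at c2
  set v := l ⟨m, hm⟩
  have b1 : ∑ i ∈ B \ I, l i ≤ (B \ I).card • v := by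
    apply Finset.sum_le_card_nsmul
    intro i hi
    apply hl
    simp [hI] at hi
    exact Fin.le_def.2 hi.2
  have b2 : (I \ B).card • v ≤ ∑ i ∈ I \ B, l i := by
    apply Finset.card_nsmul_le_sum
    intro i hi
    apply hl
    simp [hI] at hi
    exact Fin.le_def.2 hi.1.le
  have b3 : (B \ I).card • v ≤ (I \ B).card • v :=
    nsmul_le_nsmul_left (h0 _) (by omega)
  linarith

/-- The support of an antitone nonnegative family is an initial segment. -/
theorem support_initial {n r : ℕ} (l : Fin n → ℝ) (hl : Antitone l) (h0 : ∀ i, 0 ≤ l i)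
    (hr : (univ.filter fun i => l i ≠ 0).card = r) (i : Fin n) : l i ≠ 0 ↔ i.1 < r := by
  constructor
  · intro h
    have : Finset.Iic i ⊆ univ.filter fun i => l i ≠ 0 := by
      intro j hj
      have h1 := hl (Finset.mem_Iic.1 hj)
      have h2 := lt_of_le_of_ne (h0 i) h.symm
      simp only [Finset.mem_filter, Finset.mem_univ, true_and]
      exact (lt_of_lt_of_le h2 h1).ne'
    have := Finset.card_le_card this
    rw [hr] at this
    simp at this
    omega
  · intro h h'
    have : (univ.filter fun i => l i ≠ 0) ⊆ Finset.Iio i := by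
      intro j hj
      simp only [Finset.mem_filter, Finset.mem_univ, true_and] at hj
      rw [Finset.mem_Iio]
      by_contra hcon
      have h1 := hl (not_lt.1 hcon)
      exact hj (le_antisymm (h1.trans h'.le) (h0 j))
    have := Finset.card_le_card this
    rw [hr] at this
    simp at this
    omega

/-- The vector `e_p + 2 e_q`. -/
def wvec {n : Type*} [DecidableEq n] (p q : n) (a : n) : ℝ :=
  if a = p then 1 else if a = q then 2 else 0

theorem wvec_sum {n : Type*} [Fintype n] [DecidableEq n] (p q : n) (hpq : p ≠ q) (f : n → ℝ) :
    ∑ z, wvec p q z * wvec p q z * f z = f p + 4 * f q := by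
  have h : ∀ z, wvec p q z * wvec p q z * f z
      = (if z = p then f z else 0) + (if z = q then 4 * f z else 0) := by
    intro z
    unfold wvec
    by_cases h1 : z = p
    · subst h1; simp [hpq]
    · by_cases h2 : z = q
      · simp [h2]
        split_ifs with h3
        · exact absurd h3.symm hpq
        · norm_num
      · simp [h1, h2]
  rw [Finset.sum_congr rfl fun z _ => h z, Finset.sum_add_distrib]
  simp

/-- Entries of the reflection. -/
noncomputable def rent {n : Type*} [DecidableEq n] (p q : n) (a b : n) : ℝ :=
  (if a = b then 1 else 0) - 2 / 5 * (wvec p q a * wvec p q b)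

theorem rent_conj {n : Type*} [Fintype n] [DecidableEq n] (p q : n) (hpq : p ≠ q) (f : n → ℝ)
    (a b : n) : ∑ z, rent p q a z * f z * rent p q b z
      = (if a = b then f a else 0) - 2 / 5 * (wvec p q a * wvec p q b) * (f a + f b)
        + 4 / 25 * (wvec p q a * wvec p q b) * (f p + 4 * f q) := by
  rw [← wvec_sum p q hpq f]
  have h : ∀ z, rent p q a z * f z * rent p q b z
      = (if a = z then (if b = z then f z else 0) else 0)
        - (if a = z then 2 / 5 * (wvec p q b * wvec p q z) * f z else 0)
        - (if b = z then 2 / 5 * (wvec p q a * wvec p q z) * f z else 0)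
        + 4 / 25 * (wvec p q a * wvec p q b) * (wvec p q z * wvec p q z * f z) := by
    intro z
    unfold rent
    split_ifs <;> ring
  rw [Finset.sum_congr rfl fun z _ => h z, Finset.sum_add_distrib, Finset.sum_sub_distrib,
    Finset.sum_sub_distrib, ← Finset.mul_sum]
  simp only [Finset.sum_ite_eq, Finset.mem_univ, if_true]
  by_cases hab : a = b
  · subst hab; simp; ring
  · simp [hab, Ne.symm hab]; ring

theorem exists_unitary_conj {n : Type*} [Fintype n] [DecidableEq n] {C : Matrix n n ℂ}
    (hC : C.IsHermitian) (L : n → ℝ) (e : n ≃ n) (hL : ∀ b, L (e b) = hC.eigenvalues b)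
    (p q : n) (hpq : p ≠ q) (hq : L q = 0) :
    ∃ U ∈ Matrix.unitaryGroup n ℂ, ∀ a b, (U * C * Uᴴ) a b =
      (((if a = b then L a else 0) - 2 / 5 * (wvec p q a * wvec p q b) * (L a + L b)
        + 4 / 25 * (wvec p q a * wvec p q b) * L p : ℝ) : ℂ) := by
  set V := hC.eigenvectorUnitary
  set W : Matrix n n ℂ := Matrix.of fun a b => (rent p q a (e b) : ℂ) with hW
  have hWW : W * Wᴴ = 1 := by
    ext a b
    rw [Matrix.mul_apply]
    have h1 : ∀ z, W a z * Wᴴ z b = ((rent p q a (e z) * 1 * rent p q b (e z) : ℝ) : ℂ) := by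
      intro z; simp [hW]
    rw [Finset.sum_congr rfl fun z _ => h1 z, ← Complex.ofReal_sum,
      Equiv.sum_comp e (fun z => rent p q a z * 1 * rent p q b z),
      rent_conj p q hpq (fun _ => 1) a b, Matrix.one_apply]
    split_ifs <;> norm_num <;> ring
  have hWu : W ∈ Matrix.unitaryGroup n ℂ := Matrix.mem_unitaryGroup_iff.2 hWW
  have hVV : ((V : Matrix n n ℂ))ᴴ * (V : Matrix n n ℂ) = 1 :=
    Matrix.mem_unitaryGroup_iff'.1 V.2
  refine ⟨W * (V : Matrix n n ℂ)ᴴ, mul_mem hWu (star V).2, fun a b => ?_⟩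
  have hs : C = (V : Matrix n n ℂ) * diagonal (fun i => (hC.eigenvalues i : ℂ))
      * (V : Matrix n n ℂ)ᴴ := by
    have := hC.spectral_theorem
    rw [Unitary.conjStarAlgAut_apply] at this
    exact this
  have hmain : (W * (V : Matrix n n ℂ)ᴴ) * C
      * (W * (V : Matrix n n ℂ)ᴴ)ᴴ
      = W * diagonal (fun i => (hC.eigenvalues i : ℂ)) * Wᴴ := by
    rw [Matrix.conjTranspose_mul, Matrix.conjTranspose_conjTranspose]
    set Vm := (V : Matrix n n ℂ)
    set Dg := diagonal (fun i => (hC.eigenvalues i : ℂ))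
    calc W * Vmᴴ * C * (Vm * Wᴴ) = W * Vmᴴ * (Vm * Dg * Vmᴴ) * (Vm * Wᴴ) := by rw [← hs]
      _ = W * (Vmᴴ * Vm) * Dg * (Vmᴴ * Vm) * Wᴴ := by simp only [Matrix.mul_assoc]
      _ = W * Dg * Wᴴ := by rw [hVV]; simp
  rw [hmain, Matrix.mul_apply]
  have h1 : ∀ z, (W * diagonal (fun i => (hC.eigenvalues i : ℂ))) a z * Wᴴ z b
      = ((rent p q a (e z) * L (e z) * rent p q b (e z) : ℝ) : ℂ) := by
    intro z; rw [hL]; simp [hW, Matrix.mul_diagonal]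
  rw [Finset.sum_congr rfl fun z _ => h1 z, ← Complex.ofReal_sum,
      Equiv.sum_comp e (fun z => rent p q a z * L z * rent p q b z),
      rent_conj p q hpq L a b, hq]
  norm_num

theorem rank_between_multiples (d1 d2 : ℕ) (hd1 : 2 ≤ d1) (hd12 : d1 ≤ d2)
    (C : Matrix (Fin d1 × Fin d2) (Fin d1 × Fin d2) ℂ) (hC : C.PosSemidef)
    (k : ℕ) (hk2 : 2 ≤ k) (hkd : k ≤ d1)
    (hlow : (k - 1) * d2 < C.rank) (hhigh : C.rank ≤ k * (d2 - 1)) :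
    ∃ U : Matrix (Fin d1 × Fin d2) (Fin d1 × Fin d2) ℂ,
      U ∈ Matrix.unitaryGroup (Fin d1 × Fin d2) ℂ ∧
      ∀ D : Matrix (Fin d1 × Fin d2) (Fin d1 × Fin d2) ℂ, D.IsDiag →
        (∃ g : Equiv.Perm (Fin d1 × Fin d2), ∀ p, D p p = (hC.1.eigenvalues (g p) : ℂ)) →
        ∀ (hU1 : (ptrace1 (U * C * Uᴴ)).IsHermitian)
          (hU2 : (ptrace2 (U * C * Uᴴ)).IsHermitian)
          (hD1 : (ptrace1 D).IsHermitian) (hD2 : (ptrace2 D).IsHermitian),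
          ¬ Majorizes (Sum.elim hU1.eigenvalues hU2.eigenvalues)
              (Sum.elim hD1.eigenvalues hD2.eigenvalues) := by
  have hd2 : 2 ≤ d2 := hd1.trans hd12
  set n := Fintype.card (Fin d1 × Fin d2) with hn
  have hnc : n = d1 * d2 := by simp [hn]
  set l : Fin n → ℝ := hC.1.eigenvalues₀ with hl_def
  set ε : Fin n ≃ Fin d1 × Fin d2 := Fintype.equivOfCardEq (Fintype.card_fin _) with hε
  have heig : ∀ z, hC.1.eigenvalues z = l (ε.symm z) := fun z => rfl
  have hl : Antitone l := hC.1.eigenvalues₀_antitone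
  have hl0 : ∀ i, 0 ≤ l i := by
    intro i
    have := hC.eigenvalues_nonneg (ε i)
    rwa [heig, Equiv.symm_apply_apply] at this
  set r := C.rank with hr
  have hrank : (univ.filter fun i => l i ≠ 0).card = r := by
    rw [hr, hC.1.rank_eq_card_non_zero_eigs, Fintype.card_subtype]
    refine Finset.card_bij (fun i _ => ε i) ?_ ?_ ?_
    · intro i hi
      simpa [heig] using hi
    · intro i _ j _ h
      exact ε.injective h
    · intro z hz
      refine ⟨ε.symm z, ?_, by simp⟩
      simpa [heig] using hz
  have hsupp := support_initial l hl hl0 hrank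
  have hrn : r ≤ n := by
    rw [← hrank]; simpa using Finset.card_le_univ (univ.filter fun i => l i ≠ 0)
  have hrd : d2 < r := by
    have : 1 * d2 ≤ (k - 1) * d2 := Nat.mul_le_mul_right _ (by omega)
    omega
  set m := d2 - 1 with hm
  have hm0 : 0 < m := by omega
  -- the placement
  obtain ⟨g, hg1, hg2⟩ : ∃ g : Fin n ≃ Fin d1 × Fin d2,
      (∀ i, i.1 < r → (g i).1.1 = i.1 / m) ∧ (∀ i, i.1 < r → (g i).2.1 = i.1 % m) := by
    set f : Fin n → Fin d1 × Fin d2 := fun i =>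
      if h : i.1 / m < d1 then (⟨i.1 / m, h⟩, ⟨i.1 % m, by
        have := Nat.mod_lt i.1 hm0
        omega⟩) else (⟨0, by omega⟩, ⟨0, by omega⟩) with hf
    have hlt : ∀ i : Fin n, i.1 < r → i.1 / m < d1 := by
      intro i hi
      have : i.1 / m < k := by
        rw [Nat.div_lt_iff_lt_mul hm0]
        omega
      omega
    have hf1 : ∀ i : Fin n, i.1 < r → (f i).1.1 = i.1 / m := by
      intro i hi
      simp [hf, hlt i hi]
    have hf2 : ∀ i : Fin n, i.1 < r → (f i).2.1 = i.1 % m := by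
      intro i hi
      simp [hf, hlt i hi]
    obtain ⟨g, hg⟩ := Finset.exists_equiv_extend_of_card_eq
      (t := (univ : Finset (Fin d1 × Fin d2))) (α := Fin n) (by simp [hn])
      (s := univ.filter fun i : Fin n => i.1 < r) (f := f) (Finset.subset_univ _) (by
        intro i hi j hj hij
        simp only [Finset.coe_filter, Finset.mem_univ, true_and, Set.mem_ofPred_eq] at hi hj
        have e1 := hf1 i hi
        rw [hij, hf1 j hj] at e1
        have e2 := hf2 i hi
        rw [hij, hf2 j hj] at e2
        apply Fin.ext
        rw [← Nat.div_add_mod i.1 m, ← Nat.div_add_mod j.1 m, e1, e2])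
    refine ⟨g.trans (Equiv.subtypeUnivEquiv (by simp)), ?_, ?_⟩
    · intro i hi
      rw [← hf1 i hi, ← hg i (by simpa using hi)]
      rfl
    · intro i hi
      rw [← hf2 i hi, ← hg i (by simpa using hi)]
      rfl
  set L : Fin d1 × Fin d2 → ℝ := fun z => l (g.symm z) with hL
  have hLg : ∀ i, L (g i) = l i := fun i => by simp [hL]
  have hL0 : ∀ z, 0 ≤ L z := fun z => hl0 _
  have hLs : ∀ z, L z ≠ 0 → z.1.1 < k ∧ z.2.1 < m := by
    intro z hz
    have h1 : (g.symm z).1 < r := (hsupp _).1 hz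
    have e1 := hg1 _ h1
    have e2 := hg2 _ h1
    rw [Equiv.apply_symm_apply] at e1 e2
    rw [e1, e2]
    refine ⟨?_, Nat.mod_lt _ hm0⟩
    rw [Nat.div_lt_iff_lt_mul hm0]
    omega
  set ir : Fin n := ⟨r - 1, by omega⟩ with hir
  set p := g ir with hp
  set i0 : Fin d1 := ⟨0, by omega⟩ with hi0
  set s0 : Fin d2 := ⟨m, by omega⟩ with hs0
  set q : Fin d1 × Fin d2 := (i0, s0) with hq
  set c := l ir with hc
  have hLp : L p = c := hLg ir
  have hirr : ir.1 < r := by simp only [hir]; omega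
  have hcpos : 0 < c := lt_of_le_of_ne (hl0 _) ((hsupp ir).2 hirr).symm
  have hp1 : p.1 ≠ i0 := by
    intro h
    have h1 := hg1 ir hirr
    rw [← hp, h] at h1
    have h2 : 0 < ir.1 / m := Nat.div_pos (by simp only [hir]; omega) hm0
    simp only [hi0] at h1
    omega
  have hp2 : p.2 ≠ s0 := by
    intro h
    have h1 := (hLs p (by rw [hLp]; exact hcpos.ne')).2
    rw [h] at h1
    exact lt_irrefl _ h1
  have hpq : p ≠ q := fun h => hp1 (by rw [h])
  have hLlast : ∀ i, L (i, s0) = 0 := by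
    intro i
    by_contra h
    exact lt_irrefl _ (hLs _ h).2
  have hLq : L q = 0 := hLlast i0
  obtain ⟨U, hU, hM⟩ := exists_unitary_conj hC.1 L (ε.symm.trans g)
    (fun b => by rw [Equiv.trans_apply, hLg, heig]) p q hpq hLq
  refine ⟨U, hU, ?_⟩
  rintro D hDd ⟨σ, hσ⟩ hU1 hU2 hD1 hD2
  set M := U * C * Uᴴ with hMdef
  set δ := 16 / 25 * c with hδ
  set N : Fin d1 × Fin d2 → ℝ := fun z =>
    L z + ((if z = q then δ else 0) - (if z = p then δ else 0)) with hN
  have hMd : ∀ z, M z z = (N z : ℂ) := by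
    intro z
    rw [hM z z]
    congr 1
    simp only [hN, wvec, if_true]
    by_cases h1 : z = p
    · rw [h1]; simp only [if_true, hLp, hδ, if_neg hpq]; ring
    · by_cases h2 : z = q
      · rw [h2, if_neg hpq.symm, if_pos rfl, if_pos rfl, if_neg hpq.symm, hLp, hLq, hδ]; ring
      · simp [h1, h2]
  have hw : ∀ z z', z ≠ z' → (z.1 = z'.1 ∨ z.2 = z'.2) → wvec p q z * wvec p q z' = 0 := by
    intro z z' hne hor
    unfold wvec
    by_cases h1 : z = p
    · by_cases h2 : z' = q
      · exfalso
        rw [h1, h2] at hor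
        exact hor.elim hp1 hp2
      · have h3 : z' ≠ p := fun h => hne (h1.trans h.symm)
        simp [h2, h3]
    · by_cases h2 : z = q
      · by_cases h3 : z' = p
        · exfalso
          rw [h2, h3] at hor
          exact hor.elim (fun h => hp1 h.symm) (fun h => hp2 h.symm)
        · have h4 : z' ≠ q := fun h => hne (h2.trans h.symm)
          simp [h3, h4]
      · simp [h1, h2]
  have hMo : ∀ z z', z ≠ z' → (z.1 = z'.1 ∨ z.2 = z'.2) → M z z' = 0 := by
    intro z z' hne hor
    rw [hM z z', hw z z' hne hor]
    simp [hne]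
  have hdU1 : (ptrace1 M).IsDiag := by
    intro s t hst
    simp only [ptrace1, Matrix.of_apply]
    exact Finset.sum_eq_zero fun i _ => hMo _ _ (fun h => hst (Prod.mk.inj h).2) (Or.inl rfl)
  have hdU2 : (ptrace2 M).IsDiag := by
    intro i j hij
    simp only [ptrace2, Matrix.of_apply]
    exact Finset.sum_eq_zero fun s _ => hMo _ _ (fun h => hij (Prod.mk.inj h).1) (Or.inr rfl)
  have hdD1 : (ptrace1 D).IsDiag := by
    intro s t hst
    simp only [ptrace1, Matrix.of_apply]
    exact Finset.sum_eq_zero fun i _ => hDd (fun h => hst (Prod.mk.inj h).2)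
  have hdD2 : (ptrace2 D).IsDiag := by
    intro i j hij
    simp only [ptrace2, Matrix.of_apply]
    exact Finset.sum_eq_zero fun s _ => hDd (fun h => hij (Prod.mk.inj h).1)
  obtain ⟨τ1, hτ1⟩ := eig_diag_perm hU1 hdU1
  obtain ⟨τ2, hτ2⟩ := eig_diag_perm hU2 hdU2
  obtain ⟨τ3, hτ3⟩ := eig_diag_perm hD1 hdD1
  obtain ⟨τ4, hτ4⟩ := eig_diag_perm hD2 hdD2
  set φ : Fin d1 × Fin d2 ≃ Fin n := σ.trans ε.symm with hφ
  set μ : Fin d1 × Fin d2 → ℝ := fun z => l (φ z) with hμ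
  have hDμ : ∀ z, D z z = (μ z : ℂ) := fun z => by rw [hσ z, heig]; rfl
  set x : Fin d2 ⊕ Fin d1 → ℝ := Sum.elim (fun s => ∑ i, N (i, s)) (fun i => ∑ s, N (i, s)) with hx
  intro hmaj
  have hmaj' : Majorizes x
      (Sum.elim (fun s => ∑ i, μ (i, s)) (fun i => ∑ s, μ (i, s))) := by
    apply majorizes_comp (Equiv.sumCongr τ1 τ2) (Equiv.sumCongr τ3 τ4)
    convert hmaj using 1
    · funext j
      rcases j with s | i
      · refine Eq.trans ?_ (hτ1 s).symm
        simp [ptrace1, hx, hMd]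
      · refine Eq.trans ?_ (hτ2 i).symm
        simp [ptrace2, hx, hMd]
    · funext j
      rcases j with s | i
      · refine Eq.trans ?_ (hτ3 s).symm
        simp [ptrace1, hDμ]
      · refine Eq.trans ?_ (hτ4 i).symm
        simp [ptrace2, hDμ]
  have hsumL : ∑ z, L z = ∑ i, l i := Equiv.sum_comp g.symm l
  have hsumμ : ∑ z, μ z = ∑ i, l i := Equiv.sum_comp φ l
  have hsumN : ∑ z, N z = ∑ i, l i := by
    simp only [hN, Finset.sum_add_distrib, Finset.sum_sub_distrib]
    rw [hsumL]
    simp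
  have hmn : m < n := by omega
  refine not_majorizes_core d1 d2 k hd12 hk2 hkd μ (fun z => hl0 _) c
    (∑ i ∈ univ.filter (fun i : Fin n => i.1 < m), l i) ?_ ?_ ?_ x (Sum.inr i0) ?_
    ((univ.filter fun s : Fin d2 => s.1 < m).disjSum (univ.filter fun i : Fin d1 => i.1 < k))
    ?_ ?_ hmaj'
  · intro z hz
    have h1 := (hsupp _).1 hz
    apply hl
    rw [Fin.le_def]
    simp only [hir]
    omega
  · refine lt_of_lt_of_eq hlow ?_
    rw [← hrank]
    symm
    refine Finset.card_bij (fun z _ => φ z) ?_ ?_ ?_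
    · intro z hz
      simpa [hμ] using hz
    · intro z _ z' _ h
      exact φ.injective h
    · intro i hi
      refine ⟨φ.symm i, ?_, by simp⟩
      simpa [hμ] using hi
  · intro B hB
    have := sum_le_initial l hl hl0 hmn (B.map φ.toEmbedding) (by simpa using hB)
    rw [Finset.sum_map] at this
    exact this
  · have h1 : x (Sum.inr i0) = ∑ s, L (i0, s) + δ := by
      simp only [hx, Sum.elim_inr, hN, Finset.sum_add_distrib, Finset.sum_sub_distrib]
      have e1 : ∀ s, (if (i0, s) = p then δ else 0) = 0 := fun s =>
        if_neg fun h => hp1 (by rw [← h])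
      have e2 : ∀ s, (if (i0, s) = q then δ else 0) = if s = s0 then δ else 0 := fun s => by
        simp [hq]
      simp [e1, e2]
    have h2 : ∑ i ∈ univ.filter (fun i : Fin n => i.1 < m), l i ≤ ∑ s, L (i0, s) := by
      have e1 : ∑ i ∈ univ.filter (fun i : Fin n => i.1 < m), l i
          = ∑ z ∈ (univ.filter (fun i : Fin n => i.1 < m)).map g.toEmbedding, L z := by
        rw [Finset.sum_map]
        exact Finset.sum_congr rfl fun i _ => (hLg i).symm
      have e2 : ∑ s, L (i0, s) = ∑ z ∈ ({i0} : Finset (Fin d1)) ×ˢ (univ : Finset (Fin d2)), L z := by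
        rw [Finset.sum_product]; simp
      rw [e1, e2]
      refine Finset.sum_le_sum_of_subset_of_nonneg ?_ fun _ _ _ => hL0 _
      intro z hz
      obtain ⟨i, hi, rfl⟩ := Finset.mem_map.1 hz
      have hi : i.1 < m := by simpa using hi
      simp only [Finset.mem_product, Finset.mem_singleton, Finset.mem_univ, and_true]
      apply Fin.ext
      have := hg1 i (by omega)
      rw [Nat.div_eq_of_lt hi] at this
      exact this
    rw [h1]
    have : 0 < δ := by positivity
    linarith
  · rw [Finset.card_disjSum]
    have e1 : (univ.filter fun s : Fin d2 => s.1 < m).card = m := by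
      rw [Fin.card_filter_val_lt]; omega
    have e2 : (univ.filter fun i : Fin d1 => i.1 < k).card = k := by
      rw [Fin.card_filter_val_lt]; omega
    omega
  · rw [Finset.sum_disjSum, hsumμ]
    have hNz : ∀ z : Fin d1 × Fin d2, k ≤ z.1.1 → N z = 0 := by
      intro z hz
      have h1 : z ≠ q := by
        rintro rfl
        simp only [hq, hi0] at hz
        omega
      have h2 : L z = 0 := by
        by_contra h
        have := (hLs z h).1
        omega
      have h3 : z ≠ p := by
        intro h
        rw [h, hLp] at h2
        exact hcpos.ne' h2
      simp [hN, h1, h2, h3]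
    have r1 : ∑ i ∈ univ.filter (fun i : Fin d1 => i.1 < k), x (Sum.inr i) = ∑ i, l i := by
      rw [← hsumN, Fintype.sum_prod_type, Finset.sum_filter]
      refine Finset.sum_congr rfl fun i _ => ?_
      split_ifs with h
      · rfl
      · exact (Finset.sum_eq_zero fun s _ => hNz (i, s) (not_lt.1 h)).symm
    have hlast : ∑ i, N (i, s0) = δ := by
      simp only [hN, Finset.sum_add_distrib, Finset.sum_sub_distrib]
      have e1 : ∀ i, (if (i, s0) = p then δ else 0) = 0 := fun s =>
        if_neg fun h => hp2 (by rw [← h])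
      have e2 : ∀ i, (if (i, s0) = q then δ else 0) = if i = i0 then δ else 0 := fun s => by
        simp [hq]
      simp [e1, e2, hLlast]
    have r2 : ∑ s ∈ univ.filter (fun s : Fin d2 => s.1 < m), x (Sum.inl s) = ∑ i, l i - δ := by
      have hf : (univ.filter fun s : Fin d2 => s.1 < m) = univ.erase s0 := by
        ext s
        simp only [Finset.mem_filter, Finset.mem_univ, true_and, Finset.mem_erase, and_true]
        rw [Ne, Fin.ext_iff]
        simp only [hs0]
        omega
      have := Finset.sum_erase_add (univ : Finset (Fin d2)) (fun s => ∑ i, N (i, s))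
        (Finset.mem_univ s0)
      rw [hlast, ← Fintype.sum_prod_type_right, hsumN] at this
      rw [hf]
      simp only [hx, Sum.elim_inl]
      linarith
    rw [r1, r2, hδ]
    linarith
end
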